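/- arXiv:0712.1093 — 2 statements merged into one kernel-verified Lean document; each statement's English description precedes it below -/
import Mathlib

section
/- For every t > 0 and every a > 0, E[ (A_t − a)^+ ] = t − a + a² · E[ (a + A_t)^{-1} · exp( 2·M_t/(a + A_t) − 2/a ) ]. -/
open MeasureTheory ProbabilityTheory Real Set

noncomputable section

/-- A standard one-dimensional Brownian motion `B` (with `B 0 = 0`, continuous
paths, Gaussian increments and independent increments) on a probability space
with measure `P`. -/
structure IsBrownianMotion {Ω : Type*} [MeasurableSpace Ω]
    (P : Measure Ω) (B : ℝ → Ω → ℝ) : Prop where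
  isProbabilityMeasure : IsProbabilityMeasure P
  measurable : ∀ t : ℝ, Measurable (B t)
  start : ∀ ω, B 0 ω = 0
  continuous_paths : ∀ ω, Continuous fun t => B t ω
  gaussian_increments : ∀ s t : ℝ, 0 ≤ s → s ≤ t →
    P.map (fun ω => B t ω - B s ω) = gaussianReal 0 (Real.toNNReal (t - s))
  indep_increments : ∀ t : ℕ → ℝ, Monotone t → 0 ≤ t 0 →
    iIndepFun
      (fun (i : ℕ) (ω : Ω) => B (t (i + 1)) ω - B (t i) ω) P

/-- The exponential martingale `M_t = exp (B_t - t/2)`. -/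
def M {Ω : Type*} (B : ℝ → Ω → ℝ) (t : ℝ) (ω : Ω) : ℝ :=
  Real.exp (B t ω - t / 2)

/-- The time integral `A_t = ∫_0^t exp (B_s - s/2) ds`. -/
def A {Ω : Type*} (B : ℝ → Ω → ℝ) (t : ℝ) (ω : Ω) : ℝ :=
  ∫ s in (0 : ℝ)..t, Real.exp (B s ω - s / 2)

/-- The time integral with drift `ν`: `A_t^{(ν)} = ∫_0^t exp (B_s + (ν - 1/2) s) ds`. -/
def Adrift {Ω : Type*} (B : ℝ → Ω → ℝ) (ν t : ℝ) (ω : Ω) : ℝ :=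
  ∫ s in (0 : ℝ)..t, Real.exp (B s ω + (ν - 1 / 2) * s)

variable {Ω : Type*} [MeasurableSpace Ω] (P : MeasureTheory.Measure Ω) (B : ℝ → Ω → ℝ)

/-!
Write `(X, Z) = (1 / A_t, M_t / A_t ^ 2)`. By Cameron–Martin, weighting `P` by `M_u` adds unit drift
to `B` on `[0, u]`. Letting `u` run from `0` to `t`, the resulting velocities of `(X, Z)` average
out to the direction `(1, 0)`, which yields the Stein identity
`E [(M_t - 1) F (X, Z)] = -(1 / 2) E [∂₁ F (X, Z)]` with `M_t = Z / X ^ 2`. It says that the law of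
`(X, Z)` weighted by `exp (2 x + 2 z / x)` is invariant under translations of `x > 0`, and the
translation by `1 / a` turns `E (a - A_t)⁺` into the exponential expectation.
-/

section ChangeOfMeasure

open Filter Topology
open scoped ENNReal

lemma map_withDensity_comp {α β : Type*} [MeasurableSpace α] [MeasurableSpace β] {μ : Measure α}
    {X : α → β} (hX : Measurable X) {f : β → ℝ≥0∞} (hf : Measurable f) :
    (μ.withDensity fun a => f (X a)).map X = (μ.map X).withDensity f := by
  ext S hS
  rw [Measure.map_apply hX hS, withDensity_apply _ (hX hS), withDensity_apply _ hS,
    setLIntegral_map hS hf hX]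

lemma map_eq_map_of_tendsto {α β E : Type*} [MeasurableSpace α] [MeasurableSpace β]
    [PseudoMetricSpace E] [MeasurableSpace E] [BorelSpace E]
    {μ : Measure α} {ν : Measure β} [IsFiniteMeasure μ] [IsFiniteMeasure ν]
    {f : ℕ → α → E} {F : α → E} {g : ℕ → β → E} {G : β → E}
    (hf : ∀ n, Measurable (f n)) (hg : ∀ n, Measurable (g n))
    (hfF : ∀ a, Tendsto (fun n => f n a) atTop (𝓝 (F a)))
    (hgG : ∀ b, Tendsto (fun n => g n b) atTop (𝓝 (G b)))
    (h : ∀ n, μ.map (f n) = ν.map (g n)) : μ.map F = ν.map G := by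
  have hF : Measurable F := measurable_of_tendsto_metrizable hf (tendsto_pi_nhds.2 hfF)
  have hG : Measurable G := measurable_of_tendsto_metrizable hg (tendsto_pi_nhds.2 hgG)
  refine ext_of_forall_integral_eq_of_IsFiniteMeasure fun Φ => ?_
  have hΦ : Measurable Φ := Φ.continuous.measurable
  rw [integral_map hF.aemeasurable hΦ.aestronglyMeasurable,
    integral_map hG.aemeasurable hΦ.aestronglyMeasurable]
  have hlim_left : Tendsto (fun n => ∫ a, Φ (f n a) ∂μ) atTop (𝓝 (∫ a, Φ (F a) ∂μ)) :=
    tendsto_integral_of_dominated_convergence (fun _ => ‖Φ‖)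
      (fun n => (hΦ.comp (hf n)).aestronglyMeasurable) (integrable_const _)
      (fun n => ae_of_all _ fun a => Φ.norm_coe_le_norm _)
      (ae_of_all _ fun a => (Φ.continuous.tendsto _).comp (hfF a))
  have hlim_right : Tendsto (fun n => ∫ b, Φ (g n b) ∂ν) atTop (𝓝 (∫ b, Φ (G b) ∂ν)) :=
    tendsto_integral_of_dominated_convergence (fun _ => ‖Φ‖)
      (fun n => (hΦ.comp (hg n)).aestronglyMeasurable) (integrable_const _)
      (fun n => ae_of_all _ fun b => Φ.norm_coe_le_norm _)
      (ae_of_all _ fun b => (Φ.continuous.tendsto _).comp (hgG b))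
  refine tendsto_nhds_unique hlim_left (hlim_right.congr fun n => ?_)
  rw [← integral_map (hg n).aemeasurable hΦ.aestronglyMeasurable, ← h n,
    integral_map (hf n).aemeasurable hΦ.aestronglyMeasurable]

lemma lintegral_infinitePi_prod {ι : Type*} {X : ι → Type*} [∀ i, MeasurableSpace (X i)]
    (μ : ∀ i, Measure (X i)) [∀ i, IsProbabilityMeasure (μ i)] (s : Finset ι)
    {f : ∀ i, X i → ℝ≥0∞} (hf : ∀ i, Measurable (f i)) :
    ∫⁻ x, ∏ i ∈ s, f i (x i) ∂(Measure.infinitePi μ) = ∏ i ∈ s, ∫⁻ x, f i x ∂(μ i) := by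
  rw [lintegral_prod_eq_prod_lintegral_of_indepFun s _ (iIndepFun_infinitePi hf)
    fun i => (hf i).comp (measurable_pi_apply i)]
  exact Finset.prod_congr rfl fun i _ =>
    (measurePreserving_eval_infinitePi μ i).lintegral_comp (hf i)

lemma infinitePi_withDensity_prod {ι : Type*} {X : ι → Type*} [∀ i, MeasurableSpace (X i)]
    {μ ν : ∀ i, Measure (X i)} [∀ i, IsProbabilityMeasure (μ i)] [∀ i, IsProbabilityMeasure (ν i)]
    {s : Finset ι} {f : ∀ i, X i → ℝ≥0∞} (hf : ∀ i, Measurable (f i)) (hfs : ∀ i ∉ s, f i = 1)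
    (hν : ∀ i, (μ i).withDensity (f i) = ν i) :
    (Measure.infinitePi μ).withDensity (fun x => ∏ i ∈ s, f i (x i)) = Measure.infinitePi ν := by
  classical
  refine Measure.eq_infinitePi ν fun u t ht => ?_
  let t' : ∀ i, Set (X i) := fun i => if i ∈ u then t i else univ
  have ht' : ∀ i, MeasurableSet (t' i) := fun i => by
    by_cases hi : i ∈ u <;> simp [t', hi, ht i]
  have hpi : MeasurableSet ((u : Set ι).pi t) := .pi u.countable_toSet fun i _ => ht i
  have hprod : ∀ x : ∀ i, X i, ((u : Set ι).pi t).indicator (fun x => ∏ i ∈ s, f i (x i)) x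
      = ∏ i ∈ s ∪ u, (t' i).indicator (f i) (x i) := fun x => by
    by_cases hx : x ∈ (u : Set ι).pi t
    · have hx' : ∀ i, x i ∈ t' i := fun i => by
        by_cases hi : i ∈ u
        · simpa [t', hi] using hx i hi
        · simp [t', hi]
      simp only [indicator_of_mem hx, indicator_of_mem (hx' _)]
      exact Finset.prod_subset Finset.subset_union_left fun i _ hi => by simp [hfs i hi]
    · obtain ⟨i, hi, hxi⟩ : ∃ i ∈ u, x i ∉ t i := by simpa [Set.mem_pi] using hx
      have hxi' : x i ∉ t' i := by simpa [t', hi] using hxi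
      rw [indicator_of_notMem hx, Finset.prod_eq_zero (Finset.mem_union_right s hi)
        (indicator_of_notMem hxi' _)]
  calc (Measure.infinitePi μ).withDensity (fun x => ∏ i ∈ s, f i (x i)) ((u : Set ι).pi t)
      = ∏ i ∈ s ∪ u, ν i (t' i) := by
        rw [withDensity_apply _ hpi, ← lintegral_indicator hpi, lintegral_congr hprod,
          lintegral_infinitePi_prod μ _ fun i => (hf i).indicator (ht' i)]
        refine Finset.prod_congr rfl fun i _ => ?_
        rw [lintegral_indicator (ht' i), ← withDensity_apply _ (ht' i), hν]
    _ = ∏ i ∈ u, ν i (t i) := by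
        refine (Finset.prod_subset_one_on_sdiff Finset.subset_union_right ?_ ?_).symm
        · intro i hi
          simp [t', (Finset.mem_sdiff.1 hi).2]
        · intro i hi
          simp [t', hi]

lemma gaussianReal_withDensity_exp (m : ℝ) (v : NNReal) (hv : v ≠ 0) (c : ℝ) :
    (gaussianReal m v).withDensity (fun x => ENNReal.ofReal (exp (c * (x - m) - c ^ 2 * v / 2)))
      = gaussianReal (m + c * v) v := by
  rw [gaussianReal_of_var_ne_zero _ hv, gaussianReal_of_var_ne_zero _ hv,
    ← withDensity_mul _ (measurable_gaussianPDF m v) (by fun_prop)]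
  congr 1 with x
  have hv' : (v : ℝ) ≠ 0 := NNReal.coe_ne_zero.2 hv
  rw [Pi.mul_apply, gaussianPDF, gaussianPDF, ← ENNReal.ofReal_mul (gaussianPDFReal_nonneg _ _ _),
    gaussianPDFReal, gaussianPDFReal, mul_assoc, ← exp_add]
  congr 3
  field_simp
  ring

end ChangeOfMeasure

section TranslationInvariance

open Filter Topology

lemma integrable_of_tsupport_subset {X : Type*} [TopologicalSpace X] [MeasurableSpace X]
    [OpensMeasurableSpace X] {μ : Measure X} {U : Set X}
    (hμ : ∀ x ∈ U, μ.FiniteAtFilter (𝓝 x)) {G : X → ℝ} (hG : Continuous G)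
    (hGc : HasCompactSupport G) (hGU : tsupport G ⊆ U) : Integrable G μ := by
  obtain ⟨C, hC⟩ := hGc.exists_bound_of_continuous hG
  rw [← integrableOn_iff_integrable_of_support_subset (subset_tsupport G)]
  refine Measure.integrableOn_of_bounded (M := C) ?_ hG.aestronglyMeasurable
    (ae_of_all _ hC)
  exact (hGc.isCompact.measure_lt_top_of_nhdsWithin fun x hx =>
    (hμ x (hGU hx)).filter_mono nhdsWithin_le_nhds).ne

lemma tsupport_comp_sub_subset {X : Type*} [TopologicalSpace X] [AddGroup X]
    [IsTopologicalAddGroup X] {G : X → ℝ} {U : Set X} (hGU : tsupport G ⊆ U) {w : X}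
    (hw : ∀ x ∈ U, x + w ∈ U) : tsupport (fun x => G (x - w)) ⊆ U := fun x hx => by
  rw [show (fun x => G (x - w)) = G ∘ Homeomorph.subRight w from rfl,
    tsupport_comp_eq_preimage] at hx
  simpa using hw _ (hGU hx)

lemma hasCompactSupport_comp_sub {X : Type*} [TopologicalSpace X] [AddGroup X]
    [IsTopologicalAddGroup X] {G : X → ℝ} (hGc : HasCompactSupport G) (w : X) :
    HasCompactSupport fun x => G (x - w) :=
  hGc.comp_homeomorph (Homeomorph.subRight w)

lemma sub_eq_integral_fderiv {E : Type*} [NormedAddCommGroup E] [NormedSpace ℝ E] {G : E → ℝ}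
    (hG : ContDiff ℝ 1 G) (x v : E) :
    G x - G (x - v) = ∫ r in (0 : ℝ)..1, fderiv ℝ G (x - r • v) v := by
  have hline : ∀ r : ℝ, HasDerivAt (fun r : ℝ => -G (x - r • v)) (fderiv ℝ G (x - r • v) v) r :=
    fun r => by
      have hpath : HasDerivAt (fun r : ℝ => x - r • v) (-v) r := by
        simpa using ((hasDerivAt_id r).smul_const v).const_sub x
      exact ((hG.differentiable one_ne_zero _).hasFDerivAt.comp_hasDerivAt r hpath).fun_neg
        |>.congr_deriv (by simp)
  have hcont : Continuous fun r : ℝ => fderiv ℝ G (x - r • v) v :=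
    ((hG.continuous_fderiv one_ne_zero).comp (by fun_prop)).clm_apply continuous_const
  rw [intervalIntegral.integral_eq_sub_of_hasDerivAt (fun r _ => hline r)
    (hcont.intervalIntegrable 0 1)]
  simp only [one_smul, zero_smul, sub_zero]
  ring

/-- The set swept out by `K` under the translations by `r • v` with `0 ≤ r ≤ 1`; it confines the
supports of all translates of a function supported in `K`. -/
def translationSweep {E : Type*} [AddCommGroup E] [Module ℝ E] (K : Set E) (v : E) : Set E :=
  (fun p : E × ℝ => p.1 + p.2 • v) '' (K ×ˢ Icc 0 1)

lemma isFiniteMeasure_restrict_translationSweep {E : Type*} [AddCommGroup E] [Module ℝ E]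
    [TopologicalSpace E] [ContinuousAdd E] [ContinuousSMul ℝ E] [MeasurableSpace E]
    {μ : Measure E} {U K : Set E} {v : E} (hUv : ∀ x ∈ U, ∀ r : ℝ, 0 ≤ r → x + r • v ∈ U)
    (hμ : ∀ x ∈ U, μ.FiniteAtFilter (𝓝 x)) (hK : IsCompact K) (hKU : K ⊆ U) :
    IsFiniteMeasure (μ.restrict (translationSweep K v)) := by
  refine isFiniteMeasure_restrict.2 ?_
  have hcompact : IsCompact (translationSweep K v) :=
    (hK.prod isCompact_Icc).image (by fun_prop)
  refine (hcompact.measure_lt_top_of_nhdsWithin ?_).ne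
  rintro _ ⟨⟨y, r⟩, ⟨hy, hr⟩, rfl⟩
  exact (hμ _ (hUv y (hKU hy) r hr.1)).filter_mono nhdsWithin_le_nhds

lemma fderiv_sub_smul_apply_eq_zero {E : Type*} [NormedAddCommGroup E] [NormedSpace ℝ E]
    {G : E → ℝ} {x v : E} {r : ℝ} (hr : r ∈ Icc (0 : ℝ) 1)
    (hx : x ∉ translationSweep (tsupport G) v) :
    fderiv ℝ G (x - r • v) v = 0 := by
  have hnot : x - r • v ∉ tsupport G := fun hmem => hx ⟨(_, r), ⟨hmem, hr⟩, sub_add_cancel _ _⟩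
  rw [Function.notMem_support.1 fun hmem => hnot (support_fderiv_subset ℝ hmem), zero_apply]

variable {E : Type*} [NormedAddCommGroup E] [NormedSpace ℝ E] [FiniteDimensional ℝ E]

lemma exists_contDiff_tendsto_indicator {U : Set E} (hU : IsOpen U) :
    ∃ g : ℕ → E → ℝ, (∀ n, ContDiff ℝ 1 (g n)) ∧ (∀ n, HasCompactSupport (g n)) ∧
      (∀ n, tsupport (g n) ⊆ U) ∧ (∀ n x, g n x ∈ Icc 0 1) ∧
      ∀ x, Tendsto (fun n => g n x) atTop (𝓝 (U.indicator 1 x)) := by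
  obtain ⟨f, hfU, hf, hf01⟩ := hU.exists_contDiff_support_eq (n := 1)
  let χ : ℕ → ContDiffBump (0 : E) := fun n =>
    ⟨n + 1, n + 2, n.cast_add_one_pos, by linarith⟩
  refine ⟨fun n x => smoothTransition (n * f x - 1) * χ n x, fun n => ?_, fun n => ?_,
    fun n x hx => ?_, fun n x => ?_, fun x => ?_⟩
  · exact (smoothTransition.contDiff.comp ((contDiff_const.mul hf).sub contDiff_const)).mul
      (χ n).contDiff
  · exact (χ n).hasCompactSupport.mul_left
  · have hsupp : Function.support (fun y => smoothTransition (n * f y - 1)) ⊆ {y | 1 ≤ n * f y} :=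
      fun y hy => not_lt.1 fun hlt =>
        hy (smoothTransition.zero_of_nonpos (sub_nonpos.2 hlt.le))
    have hlarge : 1 ≤ n * f x := closure_minimal hsupp
      (isClosed_le continuous_const (continuous_const.mul hf.continuous))
      (tsupport_mul_subset_left hx)
    rw [← hfU]
    intro h0
    norm_num [h0] at hlarge
  · exact ⟨mul_nonneg (smoothTransition.nonneg _) (χ n).nonneg,
      mul_le_one₀ (smoothTransition.le_one _) (χ n).nonneg (χ n).le_one⟩
  · refine tendsto_const_nhds.congr' ?_
    by_cases hx : x ∈ U
    · have hfx : 0 < f x :=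
        (hf01 (mem_range_self x)).1.lt_of_ne' (hfU.symm ▸ hx : x ∈ Function.support f)
      have hgrow : Tendsto (fun n : ℕ => n * f x) atTop atTop :=
        tendsto_natCast_atTop_atTop.atTop_mul_const hfx
      filter_upwards [hgrow.eventually_ge_atTop 2,
        tendsto_natCast_atTop_atTop.eventually_ge_atTop ‖x‖] with n hn hxn
      rw [indicator_of_mem hx, smoothTransition.one_of_one_le (by linarith),
        (χ n).one_of_mem_closedBall (mem_closedBall_zero_iff.2 (hxn.trans (by simp [χ]))),
        mul_one, Pi.one_apply]
    · have hfx : f x = 0 := by rwa [← hfU, Function.notMem_support] at hx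
      refine .of_forall fun n => ?_
      simp only [indicator_of_notMem hx, hfx]
      rw [smoothTransition.zero_of_nonpos (by simp), zero_mul]

variable [MeasurableSpace E] [BorelSpace E] {μ ν : Measure E} {U : Set E}

lemma measure_le_of_lintegral_contDiff_le (hU : IsOpen U)
    (h : ∀ g : E → ℝ, ContDiff ℝ 1 g → HasCompactSupport g → tsupport g ⊆ U → 0 ≤ g →
      ∫⁻ x, ENNReal.ofReal (g x) ∂μ ≤ ∫⁻ x, ENNReal.ofReal (g x) ∂ν) : μ U ≤ ν U := by
  obtain ⟨g, hg, hgc, hgU, hg01, hlim⟩ := exists_contDiff_tendsto_indicator hU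
  have hle : ∀ n, ∫⁻ x, ENNReal.ofReal (g n x) ∂ν ≤ ν U := fun n => by
    rw [← lintegral_indicator_one hU.measurableSet]
    refine lintegral_mono fun x => ?_
    by_cases hx : x ∈ U
    · simpa [hx] using (hg01 n x).2
    · simp [image_eq_zero_of_notMem_tsupport fun hx' => hx (hgU n hx')]
  have hindicator : ∀ x, U.indicator 1 x = liminf (fun n => ENNReal.ofReal (g n x)) atTop :=
    fun x => by
      rw [(ENNReal.tendsto_ofReal (hlim x)).liminf_eq]
      by_cases hx : x ∈ U <;> simp [hx]
  calc μ U = ∫⁻ x, liminf (fun n => ENNReal.ofReal (g n x)) atTop ∂μ := by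
        rw [← lintegral_indicator_one hU.measurableSet, lintegral_congr hindicator]
    _ ≤ liminf (fun n => ∫⁻ x, ENNReal.ofReal (g n x) ∂μ) atTop :=
        lintegral_liminf_le fun n => (hg n).continuous.measurable.ennreal_ofReal
    _ ≤ ν U := liminf_le_of_le (by isBoundedDefault) fun b hb => by
        obtain ⟨n, hn⟩ := hb.exists
        exact hn.trans ((h _ (hg n) (hgc n) (hgU n) fun x => (hg01 n x).1).trans (hle n))

lemma restrict_eq_of_lintegral_contDiff (hU : IsOpen U)
    (hμ : ∀ x ∈ U, μ.FiniteAtFilter (𝓝 x))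
    (h : ∀ g : E → ℝ, ContDiff ℝ 1 g → HasCompactSupport g → tsupport g ⊆ U → 0 ≤ g →
      ∫⁻ x, ENNReal.ofReal (g x) ∂μ = ∫⁻ x, ENNReal.ofReal (g x) ∂ν) :
    μ.restrict U = ν.restrict U := by
  have hopen : ∀ W, IsOpen W → W ⊆ U → μ W = ν W := fun W hW hWU =>
    (measure_le_of_lintegral_contDiff_le hW fun g hg hgc hgW hg0 =>
      (h g hg hgc (hgW.trans hWU) hg0).le).antisymm
    (measure_le_of_lintegral_contDiff_le hW fun g hg hgc hgW hg0 =>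
      (h g hg hgc (hgW.trans hWU) hg0).ge)
  have hnhds : ∀ x ∈ U, ∃ V, IsOpen V ∧ x ∈ V ∧ V ⊆ U ∧ μ V < ⊤ := fun x hx => by
    obtain ⟨s, hs, hμs⟩ := hμ x hx
    exact ⟨interior s ∩ U, isOpen_interior.inter hU, ⟨mem_interior_iff_mem_nhds.2 hs, hx⟩,
      inter_subset_right,
      (measure_mono (inter_subset_left.trans interior_subset)).trans_lt hμs⟩
  choose! V hV hxV hVU hμV using hnhds
  obtain ⟨T, hTU, hT, hcover⟩ := TopologicalSpace.countable_cover_nhdsWithin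
    fun x hx => mem_nhdsWithin_of_mem_nhds ((hV x hx).mem_nhds (hxV x hx))
  rw [hcover.antisymm (iUnion₂_subset fun x hx => hVU x (hTU hx)),
    Measure.restrict_biUnion_congr hT]
  intro x hx
  have : IsFiniteMeasure (μ.restrict (V x)) := ⟨by simpa using hμV x (hTU hx)⟩
  have hinter : ∀ W, IsOpen W → μ.restrict (V x) W = ν.restrict (V x) W := fun W hW => by
    rw [Measure.restrict_apply hW.measurableSet, Measure.restrict_apply hW.measurableSet]
    exact hopen _ (hW.inter (hV x (hTU hx))) (inter_subset_right.trans (hVU x (hTU hx)))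
  exact ext_of_generate_finite {W | IsOpen W} (BorelSpace.measurable_eq (α := E)) isPiSystem_isOpen
    hinter (hinter univ isOpen_univ)

lemma integral_comp_sub_of_integral_fderiv_eq_zero {v : E}
    (hUv : ∀ x ∈ U, ∀ r : ℝ, 0 ≤ r → x + r • v ∈ U) (hμ : ∀ x ∈ U, μ.FiniteAtFilter (𝓝 x))
    (h : ∀ G : E → ℝ, ContDiff ℝ 1 G → HasCompactSupport G → tsupport G ⊆ U →
      ∫ x, fderiv ℝ G x v ∂μ = 0)
    {G : E → ℝ} (hG : ContDiff ℝ 1 G) (hGc : HasCompactSupport G) (hGU : tsupport G ⊆ U) :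
    ∫ x, G (x - v) ∂μ = ∫ x, G x ∂μ := by
  let K := translationSweep (tsupport G) v
  have : IsFiniteMeasure (μ.restrict K) :=
    isFiniteMeasure_restrict_translationSweep hUv hμ hGc.isCompact hGU
  obtain ⟨C, hC⟩ := (hGc.fderiv ℝ).exists_bound_of_continuous (hG.continuous_fderiv one_ne_zero)
  have hint : Integrable (Function.uncurry fun (r : ℝ) x => fderiv ℝ G (x - r • v) v)
      ((volume.restrict (uIoc 0 1)).prod (μ.restrict K)) := by
    rw [uIoc_of_le zero_le_one]
    refine .of_bound (Continuous.aestronglyMeasurable ?_) (C * ‖v‖)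
      (ae_of_all _ fun p => ContinuousLinearMap.le_of_opNorm_le _ (hC _) v)
    exact ((hG.continuous_fderiv one_ne_zero).comp (by fun_prop)).clm_apply continuous_const
  have hinner : ∀ r ∈ uIoc (0 : ℝ) 1, ∫ x in K, fderiv ℝ G (x - r • v) v ∂μ = 0 := fun r hr => by
    rw [uIoc_of_le zero_le_one] at hr
    rw [setIntegral_eq_integral_of_forall_compl_eq_zero fun x hx =>
      fderiv_sub_smul_apply_eq_zero ⟨hr.1.le, hr.2⟩ hx]
    simpa only [fderiv_comp_sub] using h (fun x => G (x - r • v))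
      (hG.comp (contDiff_id.sub contDiff_const)) (hasCompactSupport_comp_sub hGc _)
      (tsupport_comp_sub_subset hGU fun x hx => hUv x hx r hr.1.le)
  have hdiff : ∫ x, (G x - G (x - v)) ∂μ = 0 := by
    have hvanish : ∀ x ∉ K, G x - G (x - v) = 0 := fun x hx => by
      rw [sub_eq_integral_fderiv hG, intervalIntegral.integral_congr (g := fun _ => 0) fun r hr =>
        fderiv_sub_smul_apply_eq_zero (uIcc_of_le (zero_le_one (α := ℝ)) ▸ hr) hx,
        intervalIntegral.integral_zero]
    rw [← setIntegral_eq_integral_of_forall_compl_eq_zero hvanish,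
      funext fun x => sub_eq_integral_fderiv hG x v, ← intervalIntegral_integral_swap hint,
      intervalIntegral.integral_congr_ae (ae_of_all _ hinner), intervalIntegral.integral_zero]
  have hGv : Integrable (fun x => G (x - v)) μ :=
    integrable_of_tsupport_subset hμ (hG.continuous.comp (continuous_sub_right v))
      (hasCompactSupport_comp_sub hGc v)
      (tsupport_comp_sub_subset hGU fun x hx => by simpa using hUv x hx 1 zero_le_one)
  rw [integral_sub (integrable_of_tsupport_subset hμ hG.continuous hGc hGU) hGv,
    sub_eq_zero] at hdiff
  exact hdiff.symm

lemma map_sub_restrict_eq {v : E}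
    (hU : IsOpen U) (hUv : ∀ x ∈ U, ∀ r : ℝ, 0 ≤ r → x + r • v ∈ U)
    (hμ : ∀ x ∈ U, μ.FiniteAtFilter (𝓝 x))
    (h : ∀ G : E → ℝ, ContDiff ℝ 1 G → HasCompactSupport G → tsupport G ⊆ U →
      ∫ x, fderiv ℝ G x v ∂μ = 0) :
    (μ.map fun x => x - v).restrict U = μ.restrict U := by
  refine (restrict_eq_of_lintegral_contDiff hU hμ fun G hG hGc hGU hG0 => ?_).symm
  have hGv : Integrable (fun x => G (x - v)) μ :=
    integrable_of_tsupport_subset hμ (hG.continuous.comp (continuous_sub_right v))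
      (hasCompactSupport_comp_sub hGc v)
      (tsupport_comp_sub_subset hGU fun x hx => by simpa using hUv x hx 1 zero_le_one)
  rw [lintegral_map hG.continuous.measurable.ennreal_ofReal (measurable_sub_const v),
    ← ofReal_integral_eq_lintegral_ofReal (integrable_of_tsupport_subset hμ hG.continuous hGc hGU)
      (ae_of_all _ hG0), ← integral_comp_sub_of_integral_fderiv_eq_zero hUv hμ h hG hGc hGU]
  exact ofReal_integral_eq_lintegral_ofReal hGv (ae_of_all _ fun x => hG0 (x - v))

end TranslationInvariance

section ExponentialFunctional

open Filter Topology

/-- The exponential functional `∫_0^t e^{b_s} ds` of a path `b`. -/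
def expIntegral (b : ℝ → ℝ) (t : ℝ) : ℝ := ∫ s in (0 : ℝ)..t, exp (b s)

@[simp] lemma expIntegral_zero (b : ℝ → ℝ) : expIntegral b 0 = 0 :=
  intervalIntegral.integral_same

lemma hasDerivAt_expIntegral {b : ℝ → ℝ} (hb : Continuous b) (t : ℝ) :
    HasDerivAt (expIntegral b) (exp (b t)) t :=
  (continuous_exp.comp hb).integral_hasStrictDerivAt 0 t |>.hasDerivAt

lemma continuous_expIntegral {b : ℝ → ℝ} (hb : Continuous b) : Continuous (expIntegral b) :=
  continuous_iff_continuousAt.2 fun t => (hasDerivAt_expIntegral hb t).continuousAt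

lemma strictMono_expIntegral {b : ℝ → ℝ} (hb : Continuous b) : StrictMono (expIntegral b) :=
  strictMono_of_hasDerivAt_pos (hasDerivAt_expIntegral hb) fun _ => exp_pos _

lemma expIntegral_pos {b : ℝ → ℝ} (hb : Continuous b) {t : ℝ} (ht : 0 < t) :
    0 < expIntegral b t := by
  simpa only [expIntegral_zero] using strictMono_expIntegral hb ht

lemma measurable_expIntegral {α : Type*} [MeasurableSpace α] {y : α → ℝ → ℝ}
    (hy : Measurable (Function.uncurry y)) (t : ℝ) : Measurable fun a => expIntegral (y a) t := by
  have hexp : StronglyMeasurable (Function.uncurry fun a s => exp (y a s)) :=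
    (measurable_exp.comp hy).stronglyMeasurable
  exact (hexp.integral_prod_right (ν := volume.restrict (Ioc 0 t))).measurable.sub
    (hexp.integral_prod_right (ν := volume.restrict (Ioc t 0))).measurable

/-- The step path with `x k` on `[k / r, (k + 1) / r)`, which samples a path at rate `r` when `x k`
is its value at `k / r`. -/
def stepPath (r : ℝ) (x : ℕ → ℝ) (s : ℝ) : ℝ := x ⌊s * r⌋₊

lemma measurable_uncurry_stepPath (r : ℝ) : Measurable (Function.uncurry (stepPath r)) := by
  have heval : Measurable fun p : (ℕ → ℝ) × ℕ => p.1 p.2 :=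
    measurable_from_prod_countable_left fun k => measurable_pi_apply k
  exact heval.comp (measurable_fst.prodMk (Nat.measurable_floor.comp (measurable_snd.mul_const r)))

lemma tendsto_stepPath {b : ℝ → ℝ} (hb : Continuous b) {r : ℕ → ℝ} (hr : Tendsto r atTop atTop)
    {s : ℝ} (hs : 0 ≤ s) :
    Tendsto (fun n => stepPath (r n) (fun k => b (k / r n)) s) atTop (𝓝 (b s)) :=
  (hb.tendsto s).comp ((tendsto_nat_floor_mul_div_atTop hs).comp hr)

lemma tendsto_expIntegral_stepPath {b : ℝ → ℝ} (hb : Continuous b) {r : ℕ → ℝ}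
    (hr : Tendsto r atTop atTop) {t : ℝ} (ht : 0 ≤ t) :
    Tendsto (fun n => expIntegral (stepPath (r n) fun k => b (k / r n)) t) atTop
      (𝓝 (expIntegral b t)) := by
  obtain ⟨C, hC⟩ := (isCompact_Icc (a := 0) (b := t)).exists_bound_of_continuousOn
    (continuous_exp.comp hb).continuousOn
  refine intervalIntegral.tendsto_integral_filter_of_dominated_convergence (fun _ => C) ?_ ?_
    intervalIntegrable_const ?_
  · exact .of_forall fun n =>
      (measurable_exp.comp ((measurable_uncurry_stepPath _).of_uncurry_left)).aestronglyMeasurable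
  · filter_upwards [hr.eventually_gt_atTop 0] with n hn
    refine .of_forall fun s hs => ?_
    rw [uIoc_of_le ht] at hs
    refine hC _ ⟨by positivity, ?_⟩
    have hfloor : ⌊s * r n⌋₊ / r n ≤ s :=
      (div_le_iff₀ hn).2 (Nat.floor_le (mul_nonneg hs.1.le hn.le))
    exact hfloor.trans hs.2
  · refine .of_forall fun s hs => ?_
    rw [uIoc_of_le ht] at hs
    exact (continuous_exp.tendsto _).comp (tendsto_stepPath hb hr hs.1.le)

/-- The terminal value of a path together with its exponential functional at times `u` and `t`:
the only features of the path `log M` entering the argument. -/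
def pathData (u t : ℝ) (b : ℝ → ℝ) : ℝ × ℝ × ℝ := (b t, expIntegral b u, expIntegral b t)

lemma measurable_pathData {α : Type*} [MeasurableSpace α] {y : α → ℝ → ℝ}
    (hy : Measurable (Function.uncurry y)) (u t : ℝ) : Measurable fun a => pathData u t (y a) :=
  hy.of_uncurry_right.prodMk ((measurable_expIntegral hy u).prodMk (measurable_expIntegral hy t))

lemma tendsto_pathData_stepPath {b : ℝ → ℝ} (hb : Continuous b) {r : ℕ → ℝ}
    (hr : Tendsto r atTop atTop) {u t : ℝ} (hu : 0 ≤ u) (ht : 0 ≤ t) :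
    Tendsto (fun n => pathData u t (stepPath (r n) fun k => b (k / r n))) atTop
      (𝓝 (pathData u t b)) :=
  (tendsto_stepPath hb hr ht).prodMk_nhds
    ((tendsto_expIntegral_stepPath hb hr hu).prodMk_nhds (tendsto_expIntegral_stepPath hb hr ht))

/-- The path `b` with unit drift added up to time `u`. -/
def driftUntil (u : ℝ) (b : ℝ → ℝ) (s : ℝ) : ℝ := b s + min s u

lemma continuous_driftUntil {b : ℝ → ℝ} (hb : Continuous b) (u : ℝ) :
    Continuous (driftUntil u b) :=
  hb.add (continuous_id.min continuous_const)

lemma expIntegral_driftUntil {b : ℝ → ℝ} (hb : Continuous b) {u t : ℝ} (hu : 0 ≤ u) (hut : u ≤ t) :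
    expIntegral (driftUntil u b) t
      = expIntegral (fun s => b s + s) u + exp u * (expIntegral b t - expIntegral b u) := by
  have hint : ∀ {c : ℝ → ℝ}, Continuous c → ∀ x y,
      IntervalIntegrable (fun s => exp (c s)) volume x y :=
    fun hc x y => (continuous_exp.comp hc).intervalIntegrable x y
  have hbefore : EqOn (fun s => exp (driftUntil u b s)) (fun s => exp (b s + s)) (uIcc 0 u) :=
    fun s hs => by
      rw [uIcc_of_le hu] at hs
      simp only [driftUntil, min_eq_left hs.2]
  have hafter : EqOn (fun s => exp (driftUntil u b s)) (fun s => exp u * exp (b s)) (uIcc u t) :=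
    fun s hs => by
      rw [uIcc_of_le hut] at hs
      simp only [driftUntil, min_eq_right hs.1, ← exp_add, add_comm]
  have hdrift := hint (continuous_driftUntil hb u)
  unfold expIntegral
  rw [← intervalIntegral.integral_add_adjacent_intervals (hdrift 0 u) (hdrift u t),
    intervalIntegral.integral_interval_sub_left (hint hb 0 t) (hint hb 0 u),
    intervalIntegral.integral_congr hbefore, intervalIntegral.integral_congr hafter,
    intervalIntegral.integral_const_mul]

end ExponentialFunctional

/-- The path `s ↦ log M_s = B_s - s / 2`. -/
def logM {Ω : Type*} (B : ℝ → Ω → ℝ) (ω : Ω) (s : ℝ) : ℝ := B s ω - s / 2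

lemma A_eq_expIntegral {Ω : Type*} (B : ℝ → Ω → ℝ) (t : ℝ) (ω : Ω) :
    A B t ω = expIntegral (logM B ω) t := rfl

lemma M_eq_exp_logM {Ω : Type*} (B : ℝ → Ω → ℝ) (t : ℝ) (ω : Ω) :
    M B t ω = exp (logM B ω t) := rfl

lemma M_pos {Ω : Type*} (B : ℝ → Ω → ℝ) (t : ℝ) (ω : Ω) : 0 < M B t ω := exp_pos _

variable {P B}

namespace IsBrownianMotion

open Filter Topology

section Paths

lemma continuous_logM (hB : IsBrownianMotion P B) (ω : Ω) : Continuous (logM B ω) :=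
  (hB.continuous_paths ω).sub (continuous_id.div_const 2)

lemma measurable_logM (hB : IsBrownianMotion P B) : Measurable (logM B) :=
  measurable_pi_lambda _ fun s => (hB.measurable s).sub_const _

lemma measurable_uncurry_logM (hB : IsBrownianMotion P B) :
    Measurable (Function.uncurry (logM B)) :=
  (measurable_uncurry_of_continuous_of_measurable (u := fun s ω => logM B ω s)
    hB.continuous_logM fun s => (hB.measurable s).sub_const _).comp measurable_swap

lemma measurable_uncurry_driftUntil (hB : IsBrownianMotion P B) (u : ℝ) :
    Measurable (Function.uncurry fun ω => driftUntil u (logM B ω)) :=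
  hB.measurable_uncurry_logM.add (measurable_snd.min measurable_const)

lemma measurable_M (hB : IsBrownianMotion P B) (t : ℝ) : Measurable (M B t) :=
  measurable_exp.comp hB.measurable_uncurry_logM.of_uncurry_right

lemma measurable_A (hB : IsBrownianMotion P B) (t : ℝ) : Measurable (A B t) :=
  measurable_expIntegral hB.measurable_uncurry_logM t

lemma A_pos (hB : IsBrownianMotion P B) {t : ℝ} (ht : 0 < t) (ω : Ω) : 0 < A B t ω :=
  expIntegral_pos (hB.continuous_logM ω) ht

end Paths

section CameronMartin

lemma map_logM_sub (hB : IsBrownianMotion P B) {s t : ℝ} (hs : 0 ≤ s) (hst : s ≤ t) :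
    P.map (fun ω => logM B ω t - logM B ω s)
      = gaussianReal (-((t - s) / 2)) (Real.toNNReal (t - s)) := by
  have hmeas : Measurable fun ω => B t ω - B s ω := (hB.measurable t).sub (hB.measurable s)
  have hsub : (fun ω => logM B ω t - logM B ω s)
      = (fun x => x - (t - s) / 2) ∘ fun ω => B t ω - B s ω := by
    ext ω
    simp only [logM, Function.comp_apply]
    ring
  rw [hsub, ← Measure.map_map (by fun_prop) hmeas,
    hB.gaussian_increments s t hs hst, gaussianReal_map_sub_const, zero_sub]

lemma iIndepFun_logM_sub (hB : IsBrownianMotion P B) {τ : ℕ → ℝ} (hτ : Monotone τ)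
    (hτ0 : 0 ≤ τ 0) : iIndepFun (fun k ω => logM B ω (τ (k + 1)) - logM B ω (τ k)) P := by
  convert (hB.indep_increments τ hτ hτ0).comp
    (fun k x => x - (τ (k + 1) - τ k) / 2) (fun k => measurable_id.sub_const _) using 3 with k ω
  simp only [logM, Function.comp_apply]
  ring

/-- The increments of `log M` between consecutive points of the grid `k / r`. -/
def gridIncrements (B : ℝ → Ω → ℝ) (r : ℝ) (ω : Ω) (k : ℕ) : ℝ :=
  logM B ω ((k + 1 : ℕ) / r) - logM B ω (k / r)

lemma measurable_gridIncrements (hB : IsBrownianMotion P B) (r : ℝ) :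
    Measurable (gridIncrements B r) :=
  measurable_pi_lambda _ fun _ => (hB.measurable_logM.eval).sub hB.measurable_logM.eval

lemma map_gridIncrements (hB : IsBrownianMotion P B) {r : ℝ} (hr : 0 < r) :
    P.map (gridIncrements B r)
      = Measure.infinitePi fun _ => gaussianReal (-(r⁻¹ / 2)) (Real.toNNReal r⁻¹) := by
  have hmono : Monotone fun k : ℕ => (k : ℝ) / r := fun k l hkl => by dsimp only; gcongr
  have hlaw : ∀ k : ℕ, P.map (fun ω => gridIncrements B r ω k)
      = gaussianReal (-(r⁻¹ / 2)) (Real.toNNReal r⁻¹) := fun k => by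
    have hstep : ((k + 1 : ℕ) : ℝ) / r - k / r = r⁻¹ := by
      push_cast
      ring
    rw [← hstep]
    exact hB.map_logM_sub (by positivity) (hmono k.le_succ)
  rw [← funext hlaw]
  exact (hB.iIndepFun_logM_sub hmono (by simp)).map_fun_eq_infinitePi_map
    fun k => (hB.measurable_gridIncrements r).eval

lemma logM_eq_sum_gridIncrements (hB : IsBrownianMotion P B) (r : ℝ) (ω : Ω) (k : ℕ) :
    logM B ω (k / r) = ∑ i ∈ Finset.range k, gridIncrements B r ω i := by
  simp only [gridIncrements, Finset.sum_range_sub fun i : ℕ => logM B ω (i / r)]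
  simp [logM, hB.start]

/-- The shift of the `k`-th grid increment when unit drift is added up to the grid point `n / r`. -/
def gridDrift (r : ℝ) (n k : ℕ) : ℝ := if k < n then r⁻¹ else 0

lemma sum_gridDrift {r : ℝ} (hr : 0 ≤ r) (n k : ℕ) :
    ∑ i ∈ Finset.range k, gridDrift r n i = min (k / r) (n / r) := by
  have hfilter : (Finset.range k).filter (· < n) = Finset.range (min k n) := by
    ext i
    simp
  simp only [gridDrift]
  rw [← Finset.sum_filter, hfilter, Finset.sum_const, Finset.card_range, nsmul_eq_mul,
    min_div_div_right hr, Nat.cast_min, div_eq_mul_inv]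

lemma map_gridIncrements_withDensity (hB : IsBrownianMotion P B) {r : ℝ} (hr : 0 < r) (n : ℕ) :
    (P.withDensity fun ω => ENNReal.ofReal (M B (n / r) ω)).map (gridIncrements B r)
      = P.map fun ω k => gridIncrements B r ω k + gridDrift r n k := by
  let density : ℕ → ℝ → ENNReal := fun k x => if k < n then ENNReal.ofReal (exp x) else 1
  have hX := hB.measurable_gridIncrements r
  have hdensity : ∀ k, Measurable (density k) := fun k => by
    by_cases hk : k < n <;> simp only [density, hk, if_true, if_false] <;> fun_prop
  have htilt : ∀ k, (gaussianReal (-(r⁻¹ / 2)) (Real.toNNReal r⁻¹)).withDensity (density k)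
      = (gaussianReal (-(r⁻¹ / 2)) (Real.toNNReal r⁻¹)).map (· + gridDrift r n k) := fun k => by
    rw [gaussianReal_map_add_const]
    by_cases hk : k < n
    · have hexp := gaussianReal_withDensity_exp (-(r⁻¹ / 2)) (Real.toNNReal r⁻¹)
        (by simpa using hr) 1
      simpa [density, gridDrift, hk, Real.coe_toNNReal r⁻¹ (inv_pos.2 hr).le] using hexp
    · simp [density, gridDrift, hk, ← Pi.one_def]
  have hM : ∀ ω, ENNReal.ofReal (M B (n / r) ω)
      = ∏ k ∈ Finset.range n, density k (gridIncrements B r ω k) := fun ω => by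
    rw [M_eq_exp_logM, hB.logM_eq_sum_gridIncrements, exp_sum,
      ENNReal.ofReal_prod_of_nonneg fun _ _ => (exp_pos _).le]
    exact Finset.prod_congr rfl fun k hk => by simp [density, Finset.mem_range.1 hk]
  have hshift : ∀ k, Measurable fun x : ℝ => x + gridDrift r n k := fun k => by fun_prop
  have := fun k => (gaussianReal (-(r⁻¹ / 2)) (Real.toNNReal r⁻¹)).isProbabilityMeasure_map
    (hshift k).aemeasurable
  calc _ = (P.map (gridIncrements B r)).withDensity
          (fun x => ∏ k ∈ Finset.range n, density k (x k)) := by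
        rw [funext hM]
        exact map_withDensity_comp (f := fun x => ∏ k ∈ Finset.range n, density k (x k)) hX
          (Finset.measurable_fun_prod _ fun k _ => (hdensity k).comp (measurable_pi_apply k))
    _ = (P.map (gridIncrements B r)).map fun x k => x k + gridDrift r n k := by
        rw [hB.map_gridIncrements hr, Measure.infinitePi_map_pi _ hshift]
        exact infinitePi_withDensity_prod hdensity
          (fun k hk => by simp [density, Finset.mem_range.not.1 hk, ← Pi.one_def]) htilt
    _ = P.map fun ω k => gridIncrements B r ω k + gridDrift r n k :=
        Measure.map_map (by fun_prop) hX

lemma map_logM_grid (hB : IsBrownianMotion P B) {r : ℝ} (hr : 0 < r) (n : ℕ) :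
    (P.withDensity fun ω => ENNReal.ofReal (M B (n / r) ω)).map (fun ω (k : ℕ) => logM B ω (k / r))
      = P.map fun ω (k : ℕ) => driftUntil (n / r) (logM B ω) (k / r) := by
  let partialSums : (ℕ → ℝ) → ℕ → ℝ := fun x k => ∑ i ∈ Finset.range k, x i
  have hX := hB.measurable_gridIncrements r
  have hsums : Measurable partialSums :=
    measurable_pi_lambda _ fun k => Finset.measurable_fun_sum _ fun i _ => measurable_pi_apply i
  have hdrift : ∀ ω (k : ℕ), driftUntil (n / r) (logM B ω) (k / r)
      = partialSums (fun i => gridIncrements B r ω i + gridDrift r n i) k := fun ω k => by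
    rw [driftUntil, hB.logM_eq_sum_gridIncrements, ← sum_gridDrift hr.le,
      ← Finset.sum_add_distrib]
  simp_rw [hdrift, hB.logM_eq_sum_gridIncrements]
  change Measure.map (partialSums ∘ gridIncrements B r) _
    = Measure.map (partialSums ∘ fun ω k => gridIncrements B r ω k + gridDrift r n k) _
  rw [← Measure.map_map hsums hX, hB.map_gridIncrements_withDensity hr,
    Measure.map_map hsums (by fun_prop)]

lemma lintegral_M (hB : IsBrownianMotion P B) {u : ℝ} (hu : 0 < u) :
    ∫⁻ ω, ENNReal.ofReal (M B u ω) ∂P = 1 := by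
  have := hB.isProbabilityMeasure
  have hgrid := congr_arg (· univ) (hB.map_logM_grid (inv_pos.2 hu) 1)
  have hmeas := hB.measurable_uncurry_driftUntil u
  simpa [Measure.map_apply, measurable_pi_iff, hB.measurable_logM.eval, hmeas.of_uncurry_right]
    using hgrid

lemma cameronMartin_pathData (hB : IsBrownianMotion P B) {u t : ℝ} (hu : 0 < u) (ht : 0 ≤ t) :
    (P.withDensity fun ω => ENNReal.ofReal (M B u ω)).map (fun ω => pathData u t (logM B ω))
      = P.map fun ω => pathData u t (driftUntil u (logM B ω)) := by
  have := hB.isProbabilityMeasure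
  have : IsFiniteMeasure (P.withDensity fun ω => ENNReal.ofReal (M B u ω)) :=
    isFiniteMeasure_withDensity (by simp [hB.lintegral_M hu])
  let r : ℕ → ℝ := fun n => (n + 1 : ℕ) / u
  have hr_pos : ∀ n, 0 < r n := fun n => by positivity
  have hr : Tendsto r atTop atTop :=
    (tendsto_natCast_atTop_atTop.comp (tendsto_add_atTop_nat 1)).atTop_div_const hu
  have hstep : ∀ n, Measurable fun x => pathData u t (stepPath (r n) x) := fun n =>
    measurable_pathData (measurable_uncurry_stepPath _) u t
  have hgrid : ∀ n, Measurable fun ω (k : ℕ) => logM B ω (k / r n) := fun n =>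
    measurable_pi_lambda _ fun k => hB.measurable_logM.eval
  have hgrid_drift : ∀ n, Measurable fun ω (k : ℕ) => driftUntil u (logM B ω) (k / r n) :=
    fun n => measurable_pi_lambda _ fun k => (hB.measurable_uncurry_driftUntil u).of_uncurry_right
  refine map_eq_map_of_tendsto (fun n => (hstep n).comp (hgrid n))
    (fun n => (hstep n).comp (hgrid_drift n))
    (fun ω => tendsto_pathData_stepPath (hB.continuous_logM ω) hr hu.le ht)
    (fun ω => tendsto_pathData_stepPath (continuous_driftUntil (hB.continuous_logM ω) u) hr
      hu.le ht) fun n => ?_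
  have hlaw := hB.map_logM_grid (hr_pos n) (n + 1)
  rw [show ((n + 1 : ℕ) : ℝ) / r n = u from div_div_cancel₀ (by positivity)] at hlaw
  rw [← Measure.map_map (hstep n) (hgrid n), ← Measure.map_map (hstep n) (hgrid_drift n), hlaw]

lemma integral_M_mul (hB : IsBrownianMotion P B) {u t : ℝ} (hu : 0 < u) (ht : 0 ≤ t)
    {Φ : ℝ × ℝ × ℝ → ℝ} (hΦ : Measurable Φ) :
    ∫ ω, M B u ω * Φ (pathData u t (logM B ω)) ∂P
      = ∫ ω, Φ (pathData u t (driftUntil u (logM B ω))) ∂P := by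
  have hdata := measurable_pathData hB.measurable_uncurry_logM u t
  have hdata_drift := measurable_pathData (hB.measurable_uncurry_driftUntil u) u t
  rw [← integral_map (f := Φ) hdata_drift.aemeasurable hΦ.aestronglyMeasurable,
    ← hB.cameronMartin_pathData hu ht, integral_map hdata.aemeasurable hΦ.aestronglyMeasurable,
    integral_withDensity_eq_integral_toReal_smul (hB.measurable_M u).ennreal_ofReal (by simp)]
  refine integral_congr_ae (ae_of_all _ fun ω => ?_)
  simp only [smul_eq_mul, M_eq_exp_logM, ENNReal.toReal_ofReal (exp_pos _).le]

end CameronMartin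

section Moments

lemma integrable_M (hB : IsBrownianMotion P B) {u : ℝ} (hu : 0 < u) : Integrable (M B u) P := by
  refine ⟨(hB.measurable_M u).aestronglyMeasurable, ?_⟩
  rw [hasFiniteIntegral_iff_ofReal (ae_of_all _ fun ω => (M_pos B u ω).le), hB.lintegral_M hu]
  exact ENNReal.one_lt_top

lemma integral_M (hB : IsBrownianMotion P B) {u : ℝ} (hu : 0 < u) : ∫ ω, M B u ω ∂P = 1 := by
  rw [integral_eq_lintegral_of_nonneg_ae (ae_of_all _ fun ω => (M_pos B u ω).le)
    (hB.measurable_M u).aestronglyMeasurable, hB.lintegral_M hu, ENNReal.toReal_one]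

lemma integrable_uncurry_M (hB : IsBrownianMotion P B) {t : ℝ} (ht : 0 ≤ t) :
    Integrable (Function.uncurry (M B)) ((volume.restrict (uIoc 0 t)).prod P) := by
  have := hB.isProbabilityMeasure
  have hmeas : Measurable (Function.uncurry (M B)) :=
    measurable_exp.comp (hB.measurable_uncurry_logM.comp measurable_swap)
  rw [integrable_prod_iff hmeas.aestronglyMeasurable, uIoc_of_le ht]
  refine ⟨ae_restrict_of_forall_mem measurableSet_Ioc fun u hu => hB.integrable_M hu.1,
    (integrable_const 1).congr (ae_restrict_of_forall_mem measurableSet_Ioc fun u hu => ?_)⟩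
  simp only [Function.uncurry_apply_pair, norm_of_nonneg (M_pos B _ _).le]
  exact (hB.integral_M hu.1).symm

lemma integrable_A (hB : IsBrownianMotion P B) {t : ℝ} (ht : 0 ≤ t) : Integrable (A B t) P := by
  have := hB.isProbabilityMeasure
  refine (hB.integrable_uncurry_M ht).integral_prod_right.congr (ae_of_all _ fun ω => ?_)
  simp only [Function.uncurry_apply_pair, uIoc_of_le ht, A_eq_expIntegral, expIntegral,
    intervalIntegral.integral_of_le ht, M_eq_exp_logM]

lemma integral_A (hB : IsBrownianMotion P B) {t : ℝ} (ht : 0 ≤ t) : ∫ ω, A B t ω ∂P = t := by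
  have := hB.isProbabilityMeasure
  have hM : ∀ u ∈ uIoc 0 t, ∫ ω, M B u ω ∂P = 1 := fun u hu =>
    hB.integral_M (uIoc_of_le ht ▸ hu).1
  calc ∫ ω, A B t ω ∂P = ∫ u in (0 : ℝ)..t, ∫ ω, M B u ω ∂P :=
        (intervalIntegral_integral_swap (hB.integrable_uncurry_M ht)).symm
    _ = t := by
        rw [intervalIntegral.integral_congr_ae (ae_of_all _ hM)]
        simp

end Moments

end IsBrownianMotion

section MatsumotoYor

/-- The Matsumoto–Yor variables `(1 / A_t, M_t / A_t ^ 2)` as functions of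
`(log M_t, A_u, A_t)`. -/
def matsumotoYor (d : ℝ × ℝ × ℝ) : ℝ × ℝ := (d.2.2⁻¹, exp d.1 / d.2.2 ^ 2)

/-- The velocity at time `u` of the Matsumoto–Yor variables when drift is added up to time `u`. -/
def driftVelocity (d : ℝ × ℝ × ℝ) : ℝ × ℝ :=
  d.2.1 • ((matsumotoYor d).1 ^ 2, 2 * (matsumotoYor d).1 * (matsumotoYor d).2) - matsumotoYor d

/-- The derivative of `F` along `driftVelocity`. -/
def driftDeriv (F : ℝ × ℝ → ℝ) (d : ℝ × ℝ × ℝ) : ℝ :=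
  fderiv ℝ F (matsumotoYor d) (driftVelocity d)

lemma matsumotoYor_pathData (u t : ℝ) (b : ℝ → ℝ) :
    matsumotoYor (pathData u t b) = ((expIntegral b t)⁻¹, exp (b t) / expIntegral b t ^ 2) := rfl

lemma measurable_matsumotoYor : Measurable matsumotoYor := by
  unfold matsumotoYor
  fun_prop

lemma continuousOn_matsumotoYor : ContinuousOn matsumotoYor {d | 0 < d.2.2} := by
  have hne : ∀ d ∈ {d : ℝ × ℝ × ℝ | 0 < d.2.2}, d.2.2 ≠ 0 := fun d hd => ne_of_gt hd
  have hsq : ∀ d ∈ {d : ℝ × ℝ × ℝ | 0 < d.2.2}, d.2.2 ^ 2 ≠ 0 :=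
    fun d hd => pow_ne_zero 2 (hne d hd)
  unfold matsumotoYor
  fun_prop (disch := assumption)

lemma measurable_driftDeriv {F : ℝ × ℝ → ℝ} (hF : ContDiff ℝ 1 F) : Measurable (driftDeriv F) := by
  have := measurable_matsumotoYor
  have hv : Measurable driftVelocity := by
    unfold driftVelocity
    fun_prop
  exact (hF.continuous_fderiv_apply one_ne_zero).measurable.comp (measurable_matsumotoYor.prodMk hv)

lemma continuousOn_driftDeriv {F : ℝ × ℝ → ℝ} (hF : ContDiff ℝ 1 F) :
    ContinuousOn (driftDeriv F) {d | 0 < d.2.2} := by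
  have hp := continuousOn_matsumotoYor
  have hv : ContinuousOn driftVelocity {d | 0 < d.2.2} :=
    (continuous_snd.fst.continuousOn.smul ((hp.fst.pow 2).prodMk
      ((continuousOn_const.mul hp.fst).mul hp.snd))).sub hp
  exact (hF.continuous_fderiv_apply one_ne_zero).comp_continuousOn
    (continuousOn_matsumotoYor.prodMk hv)

lemma driftDeriv_eq (F : ℝ × ℝ → ℝ) (d : ℝ × ℝ × ℝ) :
    driftDeriv F d = d.2.1 * (matsumotoYor d).1
        * fderiv ℝ F (matsumotoYor d) ((matsumotoYor d).1, 2 * (matsumotoYor d).2)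
      - fderiv ℝ F (matsumotoYor d) (matsumotoYor d) := by
  have hv : ((matsumotoYor d).1 ^ 2, 2 * (matsumotoYor d).1 * (matsumotoYor d).2)
      = (matsumotoYor d).1 • ((matsumotoYor d).1, 2 * (matsumotoYor d).2) := by
    ext <;> simp only [Prod.smul_mk, smul_eq_mul] <;> ring
  rw [driftDeriv, driftVelocity, hv, smul_smul, map_sub, map_smul, smul_eq_mul]

lemma exists_bound_driftDeriv {F : ℝ × ℝ → ℝ} (hF : ContDiff ℝ 1 F) (hFc : HasCompactSupport F) :
    ∃ K, ∀ d : ℝ × ℝ × ℝ, 0 ≤ d.2.1 → d.2.1 ≤ d.2.2 → ‖driftDeriv F d‖ ≤ K := by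
  have hbound : ∀ v : ℝ × ℝ → ℝ × ℝ, Continuous v → ∃ K, ∀ p, ‖fderiv ℝ F p (v p)‖ ≤ K :=
    fun v hv => by
      have hsupp : HasCompactSupport fun p => fderiv ℝ F p (v p) :=
        (hFc.fderiv ℝ).mono' fun p hp => subset_tsupport _ fun h0 => hp (by simp [h0])
      exact hsupp.exists_bound_of_continuous
        ((hF.continuous_fderiv one_ne_zero).clm_apply hv)
  obtain ⟨K₁, hK₁⟩ := hbound (fun p => (p.1, 2 * p.2)) (by fun_prop)
  obtain ⟨K₂, hK₂⟩ := hbound id continuous_id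
  refine ⟨K₁ + K₂, fun d hc hcd => ?_⟩
  have hratio : ‖d.2.1 * (matsumotoYor d).1‖ ≤ 1 := by
    have hnonneg : 0 ≤ (matsumotoYor d).1 := inv_nonneg.2 (hc.trans hcd)
    rw [norm_of_nonneg (mul_nonneg hc hnonneg)]
    exact div_le_one_of_le₀ hcd (hc.trans hcd)
  rw [driftDeriv_eq]
  refine (norm_sub_le _ _).trans (add_le_add ?_ (hK₂ _))
  rw [norm_mul]
  exact (mul_le_of_le_one_left (norm_nonneg _) hratio).trans (hK₁ _)

lemma continuous_expIntegral_driftUntil {b : ℝ → ℝ} (hb : Continuous b) {τ : ℝ → ℝ}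
    (hτ : Continuous τ) : Continuous fun u => expIntegral (driftUntil u b) (τ u) := by
  refine intervalIntegral.continuous_parametric_intervalIntegral_of_continuous ?_ hτ
  simp only [driftUntil, Function.uncurry_def]
  fun_prop

lemma continuous_pathData_driftUntil {b : ℝ → ℝ} (hb : Continuous b) (t : ℝ) :
    Continuous fun u => pathData u t (driftUntil u b) := by
  refine .prodMk ?_ ((continuous_expIntegral_driftUntil hb continuous_id).prodMk
    (continuous_expIntegral_driftUntil hb continuous_const))
  simp only [driftUntil]
  fun_prop

lemma continuous_pathData {b : ℝ → ℝ} (hb : Continuous b) (t : ℝ) :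
    Continuous fun u => pathData u t b :=
  continuous_const.prodMk ((continuous_expIntegral hb).prodMk continuous_const)

lemma hasDerivAt_matsumotoYor_driftUntil {b : ℝ → ℝ} (hb : Continuous b) {u t : ℝ} (hu : 0 < u)
    (hut : u < t) :
    HasDerivAt (fun u => matsumotoYor (pathData u t (driftUntil u b)))
      (driftVelocity (pathData u t (driftUntil u b))) u := by
  have hpos := expIntegral_pos (continuous_driftUntil hb u) (hu.trans hut)
  have hvalue : HasDerivAt (fun u => driftUntil u b t) 1 u := by
    refine ((hasDerivAt_id u).const_add (b t)).congr_of_eventuallyEq ?_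
    filter_upwards [Iio_mem_nhds hut] with v hv
    rw [driftUntil, min_eq_right (mem_Iio.1 hv).le, id]
  have hintegral : HasDerivAt (fun u => expIntegral (driftUntil u b) t)
      (expIntegral (driftUntil u b) t - expIntegral (driftUntil u b) u) u := by
    have hsplit := (hasDerivAt_expIntegral (b := fun s => b s + s) (by fun_prop) u).fun_add
      ((hasDerivAt_exp u).fun_mul ((hasDerivAt_expIntegral hb u).const_sub (expIntegral b t)))
    refine (hsplit.congr_of_eventuallyEq ?_).congr_deriv ?_
    · filter_upwards [Ioo_mem_nhds hu hut] with v hv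
      exact expIntegral_driftUntil hb hv.1.le hv.2.le
    · rw [expIntegral_driftUntil hb hu.le hut.le, expIntegral_driftUntil hb hu.le le_rfl, exp_add]
      ring
  have hfst : HasDerivAt (fun u => (expIntegral (driftUntil u b) t)⁻¹)
      (driftVelocity (pathData u t (driftUntil u b))).1 u := by
    refine (hintegral.fun_inv hpos.ne').congr_deriv ?_
    simp only [driftVelocity, matsumotoYor, pathData, Prod.fst_sub, Prod.smul_fst, smul_eq_mul]
    field_simp
    ring
  have hsnd : HasDerivAt (fun u => exp (driftUntil u b t) / expIntegral (driftUntil u b) t ^ 2)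
      (driftVelocity (pathData u t (driftUntil u b))).2 u := by
    refine (hvalue.exp.fun_div (hintegral.fun_pow 2) (pow_ne_zero 2 hpos.ne')).congr_deriv ?_
    simp only [driftVelocity, matsumotoYor, pathData, Prod.snd_sub, Prod.smul_snd, smul_eq_mul]
    field_simp
    ring
  exact hfst.prodMk hsnd

lemma integral_driftDeriv_driftUntil {F : ℝ × ℝ → ℝ} (hF : ContDiff ℝ 1 F) {b : ℝ → ℝ}
    (hb : Continuous b) {t : ℝ} (ht : 0 < t) :
    ∫ u in (0 : ℝ)..t, driftDeriv F (pathData u t (driftUntil u b))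
      = F (matsumotoYor (pathData t t (driftUntil t b))) - F (matsumotoYor (pathData t t b)) := by
  have hpos : ∀ u, pathData u t (driftUntil u b) ∈ {d : ℝ × ℝ × ℝ | 0 < d.2.2} := fun u =>
    expIntegral_pos (continuous_driftUntil hb u) ht
  have hpath := continuous_pathData_driftUntil hb t
  have hcont : Continuous fun u => F (matsumotoYor (pathData u t (driftUntil u b))) :=
    hF.continuous.comp (continuousOn_matsumotoYor.comp_continuous hpath hpos)
  have hstart : matsumotoYor (pathData 0 t (driftUntil 0 b)) = matsumotoYor (pathData t t b) := by
    simp [matsumotoYor, pathData, expIntegral_driftUntil hb le_rfl ht.le, driftUntil, ht.le]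
  rw [← hstart]
  refine intervalIntegral.integral_eq_sub_of_hasDerivAt_of_le ht.le hcont.continuousOn
    (fun u hu => ?_)
    (((continuousOn_driftDeriv hF).comp_continuous hpath hpos).intervalIntegrable _ _)
  exact ((hF.differentiable one_ne_zero _).hasFDerivAt).comp_hasDerivAt u
    (hasDerivAt_matsumotoYor_driftUntil hb hu.1 hu.2)

lemma integral_exp_mul_driftDeriv (F : ℝ × ℝ → ℝ) {b : ℝ → ℝ} (hb : Continuous b) {t : ℝ}
    (ht : 0 < t) :
    ∫ u in (0 : ℝ)..t, exp (b u) * driftDeriv F (pathData u t b)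
      = -(1 / 2) * fderiv ℝ F (matsumotoYor (pathData t t b)) (1, 0) := by
  have hpos := expIntegral_pos hb ht
  have hexp : Continuous fun u => exp (b u) := continuous_exp.comp hb
  have hint : IntervalIntegrable (fun u => exp (b u)) volume 0 t := hexp.intervalIntegrable 0 t
  have hint_mul : IntervalIntegrable (fun u => expIntegral b u * exp (b u)) volume 0 t :=
    ((continuous_expIntegral hb).mul hexp).intervalIntegrable 0 t
  have hsquare : ∫ u in (0 : ℝ)..t, expIntegral b u * exp (b u) = expIntegral b t ^ 2 / 2 := by
    rw [intervalIntegral.integral_eq_sub_of_hasDerivAt (f := fun u => expIntegral b u ^ 2 / 2)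
      (fun u _ => ?_) hint_mul, expIntegral_zero]
    · ring
    · exact (((hasDerivAt_expIntegral hb u).fun_pow 2).div_const 2).congr_deriv (by push_cast; ring)
  have hfst : (matsumotoYor (pathData t t b)).1 = (expIntegral b t)⁻¹ := rfl
  have hdata : ∀ u, matsumotoYor (pathData u t b) = matsumotoYor (pathData t t b) := fun _ => by
    simp only [matsumotoYor_pathData]
  simp only [driftDeriv, driftVelocity, hdata]
  generalize fderiv ℝ F (matsumotoYor (pathData t t b)) = L
  generalize matsumotoYor (pathData t t b) = p at hfst ⊢
  simp only [pathData]
  have hdirection : (expIntegral b t ^ 2 / 2) • (p.1 ^ 2, 2 * p.1 * p.2) - expIntegral b t • p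
      = (-(1 / 2) : ℝ) • ((1 : ℝ), (0 : ℝ)) := by
    ext <;> simp only [Prod.fst_sub, Prod.snd_sub, Prod.smul_fst, Prod.smul_snd, smul_eq_mul,
      hfst] <;> field_simp <;> norm_num
  have hsplit : ∀ u, exp (b u) * L (expIntegral b u • (p.1 ^ 2, 2 * p.1 * p.2) - p)
      = expIntegral b u * exp (b u) * L (p.1 ^ 2, 2 * p.1 * p.2) - exp (b u) * L p := fun u => by
    rw [map_sub, map_smul, smul_eq_mul]
    ring
  have hL := congr_arg L hdirection
  simp only [map_sub, map_smul, smul_eq_mul] at hL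
  rw [← hL, funext hsplit,
    intervalIntegral.integral_sub (hint_mul.mul_const _) (hint.mul_const _),
    intervalIntegral.integral_mul_const, intervalIntegral.integral_mul_const, hsquare, expIntegral]

end MatsumotoYor

/-- The pair `(1 / A_t, M_t / A_t ^ 2)`. -/
def matsumotoYorPair {Ω : Type*} (B : ℝ → Ω → ℝ) (t : ℝ) (ω : Ω) : ℝ × ℝ :=
  matsumotoYor (pathData t t (logM B ω))

lemma matsumotoYorPair_eq {Ω : Type*} (B : ℝ → Ω → ℝ) (t : ℝ) (ω : Ω) :
    matsumotoYorPair B t ω = ((A B t ω)⁻¹, M B t ω / A B t ω ^ 2) := rfl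

namespace IsBrownianMotion

section Stein

lemma integrable_driftDeriv_driftUntil (hB : IsBrownianMotion P B) {F : ℝ × ℝ → ℝ}
    (hF : ContDiff ℝ 1 F) (hFc : HasCompactSupport F) {t : ℝ} (ht : 0 ≤ t) :
    Integrable (Function.uncurry fun u ω => driftDeriv F (pathData u t (driftUntil u (logM B ω))))
      ((volume.restrict (uIoc 0 t)).prod P) := by
  have := hB.isProbabilityMeasure
  obtain ⟨K, hK⟩ := exists_bound_driftDeriv hF hFc
  have hmeas : Measurable (Function.uncurry fun u ω => pathData u t (driftUntil u (logM B ω))) :=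
    measurable_uncurry_of_continuous_of_measurable
      (fun ω => continuous_pathData_driftUntil (hB.continuous_logM ω) t)
      fun u => measurable_pathData (hB.measurable_uncurry_driftUntil u) u t
  rw [uIoc_of_le ht]
  refine .of_bound ((measurable_driftDeriv hF).comp hmeas).aestronglyMeasurable K ?_
  filter_upwards [Measure.quasiMeasurePreserving_fst.ae (ae_restrict_mem measurableSet_Ioc)]
    with ⟨u, ω⟩ hu
  have hb := continuous_driftUntil (hB.continuous_logM ω) u
  exact hK _ (expIntegral_pos hb hu.1).le ((strictMono_expIntegral hb).monotone hu.2)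

lemma integrable_M_mul_driftDeriv (hB : IsBrownianMotion P B) {F : ℝ × ℝ → ℝ}
    (hF : ContDiff ℝ 1 F) (hFc : HasCompactSupport F) {t : ℝ} (ht : 0 ≤ t) :
    Integrable (Function.uncurry fun u ω => M B u ω * driftDeriv F (pathData u t (logM B ω)))
      ((volume.restrict (uIoc 0 t)).prod P) := by
  have := hB.isProbabilityMeasure
  obtain ⟨K, hK⟩ := exists_bound_driftDeriv hF hFc
  have hmeas : Measurable (Function.uncurry fun u ω => pathData u t (logM B ω)) :=
    measurable_uncurry_of_continuous_of_measurable
      (fun ω => continuous_pathData (hB.continuous_logM ω) t)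
      fun u => measurable_pathData hB.measurable_uncurry_logM u t
  refine (hB.integrable_uncurry_M ht).mul_bdd (c := K)
    ((measurable_driftDeriv hF).comp hmeas).aestronglyMeasurable ?_
  filter_upwards [Measure.quasiMeasurePreserving_fst.ae (ae_restrict_mem measurableSet_uIoc)]
    with ⟨u, ω⟩ hu
  rw [uIoc_of_le ht] at hu
  have hb := hB.continuous_logM ω
  exact hK _ (expIntegral_pos hb hu.1).le ((strictMono_expIntegral hb).monotone hu.2)

lemma measurable_matsumotoYorPair (hB : IsBrownianMotion P B) (t : ℝ) :
    Measurable (matsumotoYorPair B t) :=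
  measurable_matsumotoYor.comp (measurable_pathData hB.measurable_uncurry_logM t t)

lemma integral_M_sub_one_mul (hB : IsBrownianMotion P B) {F : ℝ × ℝ → ℝ} (hF : ContDiff ℝ 1 F)
    (hFc : HasCompactSupport F) {t : ℝ} (ht : 0 < t) :
    ∫ ω, (M B t ω - 1) * F (matsumotoYorPair B t ω) ∂P
      = -(1 / 2) * ∫ ω, fderiv ℝ F (matsumotoYorPair B t ω) (1, 0) ∂P := by
  have := hB.isProbabilityMeasure
  obtain ⟨K, hK⟩ := hFc.exists_bound_of_continuous hF.continuous
  have hb := hB.continuous_logM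
  have hp := hB.measurable_matsumotoYorPair t
  have hp_drift : Measurable fun ω => matsumotoYor (pathData t t (driftUntil t (logM B ω))) :=
    measurable_matsumotoYor.comp (measurable_pathData (hB.measurable_uncurry_driftUntil t) t t)
  have hF_meas := hF.continuous.measurable
  have hFp : Integrable (fun ω => F (matsumotoYorPair B t ω)) P :=
    .of_bound (hF_meas.comp hp).aestronglyMeasurable K (ae_of_all _ fun ω => hK _)
  have hFp_drift :
      Integrable (fun ω => F (matsumotoYor (pathData t t (driftUntil t (logM B ω))))) P :=
    .of_bound (hF_meas.comp hp_drift).aestronglyMeasurable K (ae_of_all _ fun ω => hK _)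
  have hMFp : Integrable (fun ω => M B t ω * F (matsumotoYorPair B t ω)) P :=
    (hB.integrable_M ht).mul_bdd (c := K) (hF_meas.comp hp).aestronglyMeasurable
      (ae_of_all _ fun ω => hK _)
  have hcameron_martin : ∀ u ∈ uIoc 0 t,
      ∫ ω, driftDeriv F (pathData u t (driftUntil u (logM B ω))) ∂P
        = ∫ ω, M B u ω * driftDeriv F (pathData u t (logM B ω)) ∂P := fun u hu =>
    (hB.integral_M_mul (uIoc_of_le ht.le ▸ hu).1 ht.le (measurable_driftDeriv hF)).symm
  calc ∫ ω, (M B t ω - 1) * F (matsumotoYorPair B t ω) ∂P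
      = ∫ ω, (F (matsumotoYor (pathData t t (driftUntil t (logM B ω))))
          - F (matsumotoYorPair B t ω)) ∂P := by
        simp_rw [sub_one_mul]
        rw [integral_sub hMFp hFp, integral_sub hFp_drift hFp]
        exact congr_arg (· - _) (hB.integral_M_mul ht ht.le (hF_meas.comp measurable_matsumotoYor))
    _ = ∫ ω, (∫ u in (0 : ℝ)..t, driftDeriv F (pathData u t (driftUntil u (logM B ω)))) ∂P := by
        simp_rw [integral_driftDeriv_driftUntil hF (hb _) ht]
        rfl
    _ = ∫ u in (0 : ℝ)..t, ∫ ω, driftDeriv F (pathData u t (driftUntil u (logM B ω))) ∂P :=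
        (intervalIntegral_integral_swap (hB.integrable_driftDeriv_driftUntil hF hFc ht.le)).symm
    _ = ∫ u in (0 : ℝ)..t, ∫ ω, M B u ω * driftDeriv F (pathData u t (logM B ω)) ∂P :=
        intervalIntegral.integral_congr_ae (ae_of_all _ hcameron_martin)
    _ = ∫ ω, (∫ u in (0 : ℝ)..t, M B u ω * driftDeriv F (pathData u t (logM B ω))) ∂P :=
        intervalIntegral_integral_swap (hB.integrable_M_mul_driftDeriv hF hFc ht.le)
    _ = -(1 / 2) * ∫ ω, fderiv ℝ F (matsumotoYorPair B t ω) (1, 0) ∂P := by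
        rw [← integral_const_mul]
        exact integral_congr_ae (ae_of_all _ fun ω => integral_exp_mul_driftDeriv F (hb ω) ht)

end Stein

end IsBrownianMotion

section GIGWeight

/-- The weight `exp (2 x + 2 z / x)` at `(x, z)`: for fixed `z` it is the reciprocal of an
(unnormalised) generalized inverse Gaussian density in `x`. -/
def gigWeight (q : ℝ × ℝ) : ℝ := exp (2 * q.1 + 2 * q.2 / q.1)

lemma gigWeight_pos (q : ℝ × ℝ) : 0 < gigWeight q := exp_pos _

lemma measurable_gigWeight : Measurable gigWeight := by
  unfold gigWeight
  fun_prop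

lemma contDiffAt_gigWeight {q : ℝ × ℝ} (hq : q.1 ≠ 0) {n : WithTop ℕ∞} :
    ContDiffAt ℝ n gigWeight q :=
  ((contDiffAt_const.mul contDiffAt_fst).add
    ((contDiffAt_const.mul contDiffAt_snd).div contDiffAt_fst hq)).exp

lemma fderiv_gigWeight {q : ℝ × ℝ} (hq : q.1 ≠ 0) :
    fderiv ℝ gigWeight q (1, 0) = gigWeight q * (2 - 2 * q.2 / q.1 ^ 2) := by
  have hpath : HasDerivAt (fun x : ℝ => (x, q.2)) (1, 0) q.1 :=
    (hasDerivAt_id _).prodMk (hasDerivAt_const _ _)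
  have hexponent : HasDerivAt (fun x : ℝ => 2 * x + 2 * q.2 / x) (2 - 2 * q.2 / q.1 ^ 2) q.1 :=
    (((hasDerivAt_id q.1).const_mul 2).fun_add
      ((hasDerivAt_const q.1 (2 * q.2)).fun_div (hasDerivAt_id q.1) hq)).congr_deriv (by
        simp only [id]
        ring)
  have hgrad : HasFDerivAt gigWeight (fderiv ℝ gigWeight q) q :=
    ((contDiffAt_gigWeight hq).differentiableAt one_ne_zero).hasFDerivAt
  have hchain : HasDerivAt (fun x : ℝ => gigWeight (x, q.2)) (fderiv ℝ gigWeight q (1, 0)) q.1 :=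
    hgrad.comp_hasDerivAt_of_eq q.1 hpath rfl
  exact hchain.unique hexponent.exp

lemma contDiff_mul_gigWeight {G : ℝ × ℝ → ℝ} (hG : ContDiff ℝ 1 G)
    (hGU : tsupport G ⊆ {q | 0 < q.1}) : ContDiff ℝ 1 fun q => G q * gigWeight q :=
  contDiff_iff_contDiffAt.2 fun q => by
    by_cases hq : q ∈ tsupport G
    · exact hG.contDiffAt.mul (contDiffAt_gigWeight (hGU hq).ne')
    · exact (contDiffAt_const (c := (0 : ℝ))).congr_of_eventuallyEq <|
        (notMem_tsupport_iff_eventuallyEq.1 hq).mono fun y hy => by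
          simp only [hy, Pi.zero_apply, zero_mul]

lemma fderiv_mul_gigWeight {G : ℝ × ℝ → ℝ} (hG : ContDiff ℝ 1 G) {q : ℝ × ℝ} (hq : q.1 ≠ 0) :
    fderiv ℝ (fun q => G q * gigWeight q) q (1, 0)
      = fderiv ℝ G q (1, 0) * gigWeight q - 2 * ((q.2 / q.1 ^ 2 - 1) * (G q * gigWeight q)) := by
  rw [fderiv_fun_mul (hG.differentiable one_ne_zero q)
    ((contDiffAt_gigWeight hq).differentiableAt one_ne_zero)]
  simp only [add_apply, smul_apply, smul_eq_mul, fderiv_gigWeight hq]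
  ring

lemma gigWeight_div_gigWeight_add {q : ℝ × ℝ} {s : ℝ} (hq : 0 < q.1) (hs : 0 ≤ s) :
    gigWeight q / gigWeight (q + (s, 0)) = exp (2 * q.2 * s / (q.1 * (q.1 + s)) - 2 * s) := by
  have hqs : q.1 + s ≠ 0 := by positivity
  rw [gigWeight, gigWeight, ← exp_sub]
  congr 1
  simp only [Prod.fst_add, Prod.snd_add, add_zero]
  field_simp
  ring

end GIGWeight

/-- The law of `(1 / A_t, M_t / A_t ^ 2)`, weighted by `gigWeight`. -/
def weightedLaw {Ω : Type*} [MeasurableSpace Ω] (P : Measure Ω) (B : ℝ → Ω → ℝ)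
    (t : ℝ) : Measure (ℝ × ℝ) :=
  (P.map (matsumotoYorPair B t)).withDensity fun q => ENNReal.ofReal (gigWeight q)

namespace IsBrownianMotion

section Translation

open Topology

lemma integral_fderiv_mul_gigWeight (hB : IsBrownianMotion P B) {t : ℝ} (ht : 0 < t) {G : ℝ × ℝ → ℝ}
    (hG : ContDiff ℝ 1 G) (hGc : HasCompactSupport G) (hGU : tsupport G ⊆ {q | 0 < q.1}) :
    ∫ ω, fderiv ℝ G (matsumotoYorPair B t ω) (1, 0) * gigWeight (matsumotoYorPair B t ω) ∂P
      = 0 := by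
  have := hB.isProbabilityMeasure
  let F : ℝ × ℝ → ℝ := fun q => G q * gigWeight q
  have hF : ContDiff ℝ 1 F := contDiff_mul_gigWeight hG hGU
  have hFc : HasCompactSupport F := hGc.mul_right
  have hp := hB.measurable_matsumotoYorPair t
  obtain ⟨K, hK⟩ := hFc.exists_bound_of_continuous hF.continuous
  obtain ⟨C, hC⟩ := (hFc.fderiv_apply ℝ (1, 0)).exists_bound_of_continuous
    ((hF.continuous_fderiv one_ne_zero).clm_apply continuous_const)
  have hF_int : Integrable (fun ω => (M B t ω - 1) * F (matsumotoYorPair B t ω)) P :=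
    ((hB.integrable_M ht).sub (integrable_const 1)).mul_bdd (c := K)
      (hF.continuous.measurable.comp hp).aestronglyMeasurable (ae_of_all _ fun ω => hK _)
  have hF'_int : Integrable (fun ω => fderiv ℝ F (matsumotoYorPair B t ω) (1, 0)) P :=
    .of_bound ((measurable_fderiv_apply_const ℝ F (1, 0)).comp hp).aestronglyMeasurable C
      (ae_of_all _ fun ω => hC _)
  have hderiv : ∀ ω, fderiv ℝ G (matsumotoYorPair B t ω) (1, 0) * gigWeight (matsumotoYorPair B t ω)
      = fderiv ℝ F (matsumotoYorPair B t ω) (1, 0)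
        + 2 * ((M B t ω - 1) * F (matsumotoYorPair B t ω)) := fun ω => by
    have hA := hB.A_pos ht ω
    rw [fderiv_mul_gigWeight hG (inv_pos.2 hA).ne', matsumotoYorPair_eq]
    field_simp
    ring
  rw [integral_congr_ae (ae_of_all _ hderiv), integral_add hF'_int (hF_int.const_mul 2),
    integral_const_mul, hB.integral_M_sub_one_mul hF hFc ht]
  ring

lemma setLIntegral_weightedLaw (hB : IsBrownianMotion P B) (t : ℝ) {f : ℝ × ℝ → ENNReal}
    (hf : Measurable f) {S : Set (ℝ × ℝ)} (hS : MeasurableSet S) :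
    ∫⁻ q in S, f q ∂weightedLaw P B t
      = ∫⁻ ω in matsumotoYorPair B t ⁻¹' S, ENNReal.ofReal (gigWeight (matsumotoYorPair B t ω))
          * f (matsumotoYorPair B t ω) ∂P := by
  have hw := measurable_gigWeight.ennreal_ofReal
  rw [weightedLaw, setLIntegral_withDensity_eq_setLIntegral_mul _ hw hf hS,
    setLIntegral_map hS (hw.mul hf) (hB.measurable_matsumotoYorPair t)]
  rfl

lemma integral_weightedLaw (hB : IsBrownianMotion P B) (t : ℝ) {f : ℝ × ℝ → ℝ}
    (hf : Measurable f) :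
    ∫ q, f q ∂weightedLaw P B t
      = ∫ ω, f (matsumotoYorPair B t ω) * gigWeight (matsumotoYorPair B t ω) ∂P := by
  rw [weightedLaw, integral_withDensity_eq_integral_toReal_smul
    measurable_gigWeight.ennreal_ofReal (ae_of_all _ fun _ => ENNReal.ofReal_lt_top)]
  simp_rw [ENNReal.toReal_ofReal (gigWeight_pos _).le, smul_eq_mul, mul_comm (gigWeight _)]
  exact integral_map (hB.measurable_matsumotoYorPair t).aemeasurable
    (hf.mul measurable_gigWeight).aestronglyMeasurable

lemma finiteAtFilter_weightedLaw (hB : IsBrownianMotion P B) (t : ℝ) {q : ℝ × ℝ} (hq : q.1 ≠ 0) :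
    (weightedLaw P B t).FiniteAtFilter (𝓝 q) := by
  have := hB.isProbabilityMeasure
  have := Measure.isProbabilityMeasure_map (hB.measurable_matsumotoYorPair t).aemeasurable (μ := P)
  have hbound : {x | gigWeight x < gigWeight q + 1} ∈ 𝓝 q :=
    (contDiffAt_gigWeight hq (n := 0)).continuousAt.eventually_lt_const (lt_add_one _)
  refine ⟨_, hbound, ?_⟩
  rw [weightedLaw, withDensity_apply _ (measurableSet_lt measurable_gigWeight measurable_const)]
  exact setLIntegral_lt_top_of_le_nnreal (measure_ne_top _ _)
    ⟨(gigWeight q + 1).toNNReal, fun x hx => ENNReal.ofReal_le_ofReal (le_of_lt hx)⟩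

lemma map_sub_weightedLaw (hB : IsBrownianMotion P B) {t : ℝ} (ht : 0 < t) {s : ℝ} (hs : 0 ≤ s) :
    ((weightedLaw P B t).map fun q => q - (s, 0)).restrict {q | 0 < q.1}
      = (weightedLaw P B t).restrict {q | 0 < q.1} := by
  refine map_sub_restrict_eq (isOpen_lt continuous_const continuous_fst)
    (fun q hq r hr => ?_) (fun q hq => hB.finiteAtFilter_weightedLaw t (ne_of_gt hq))
    fun G hG hGc hGU => ?_
  · simpa using add_pos_of_pos_of_nonneg hq (mul_nonneg hr hs)
  · have hscale : ∀ q, fderiv ℝ G q (s, 0) = s * fderiv ℝ G q (1, 0) := fun q => by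
      rw [← smul_eq_mul, ← map_smul, Prod.smul_mk, smul_eq_mul, mul_one, smul_zero]
    simp_rw [hscale]
    rw [integral_const_mul, hB.integral_weightedLaw t (measurable_fderiv_apply_const ℝ G (1, 0)),
      hB.integral_fderiv_mul_gigWeight ht hG hGc hGU, mul_zero]

lemma setLIntegral_matsumotoYorPair (hB : IsBrownianMotion P B) {t : ℝ} (ht : 0 < t)
    {s : ℝ} (hs : 0 ≤ s) {g : ℝ × ℝ → ENNReal} (hg : Measurable g) :
    ∫⁻ ω in {ω | s < (A B t ω)⁻¹}, g (matsumotoYorPair B t ω) ∂P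
      = ∫⁻ ω, ENNReal.ofReal (gigWeight (matsumotoYorPair B t ω)
          / gigWeight (matsumotoYorPair B t ω + (s, 0)))
        * g (matsumotoYorPair B t ω + (s, 0)) ∂P := by
  let f : ℝ × ℝ → ENNReal := fun q => (ENNReal.ofReal (gigWeight q))⁻¹ * g q
  have hf : Measurable f := measurable_gigWeight.ennreal_ofReal.inv.mul hg
  have hshift : Measurable fun q : ℝ × ℝ => f (q + (s, 0)) := hf.comp (measurable_add_const _)
  have hU : MeasurableSet {q : ℝ × ℝ | 0 < q.1} := measurableSet_lt measurable_const measurable_fst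
  have hU' : MeasurableSet {q : ℝ × ℝ | s < q.1} := measurableSet_lt measurable_const measurable_fst
  calc ∫⁻ ω in {ω | s < (A B t ω)⁻¹}, g (matsumotoYorPair B t ω) ∂P
      = ∫⁻ q in {q | s < q.1}, f q ∂weightedLaw P B t := by
        rw [hB.setLIntegral_weightedLaw t hf hU']
        refine lintegral_congr fun ω => (ENNReal.mul_inv_cancel_left ?_ ENNReal.ofReal_ne_top).symm
        exact (ENNReal.ofReal_pos.2 (gigWeight_pos _)).ne'
    _ = ∫⁻ q in {q | 0 < q.1}, f (q + (s, 0)) ∂(weightedLaw P B t).map fun q => q - (s, 0) := by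
        rw [setLIntegral_map hU hshift (measurable_sub_const _)]
        simp only [sub_add_cancel, preimage_ofPred_eq, Prod.fst_sub, sub_pos]
    _ = ∫⁻ q in {q | 0 < q.1}, f (q + (s, 0)) ∂weightedLaw P B t := by
        rw [hB.map_sub_weightedLaw ht hs]
    _ = _ := by
        have huniv : matsumotoYorPair B t ⁻¹' {q | 0 < q.1} = univ :=
          eq_univ_of_forall fun ω => inv_pos.2 (hB.A_pos ht ω)
        rw [hB.setLIntegral_weightedLaw t hshift hU, huniv, Measure.restrict_univ]
        refine lintegral_congr fun ω => ?_
        rw [ENNReal.ofReal_div_of_pos (gigWeight_pos _), ENNReal.div_eq_inv_mul,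
          ← mul_assoc, mul_comm (ENNReal.ofReal _) (_)⁻¹]

lemma lintegral_sub_A (hB : IsBrownianMotion P B) {t : ℝ} (ht : 0 < t) {a : ℝ} (ha : 0 < a) :
    ∫⁻ ω, ENNReal.ofReal (a - A B t ω) ∂P
      = ∫⁻ ω, ENNReal.ofReal (a ^ 2 * ((a + A B t ω)⁻¹
          * exp (2 * M B t ω / (a + A B t ω) - 2 / a))) ∂P := by
  have hsupport : Function.support (fun ω => ENNReal.ofReal (a - A B t ω))
      ⊆ {ω | a⁻¹ < (A B t ω)⁻¹} := fun ω hω => by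
    rw [mem_ofPred_eq, inv_lt_inv₀ ha (hB.A_pos ht ω), ← sub_pos]
    exact ENNReal.ofReal_pos.1 (pos_iff_ne_zero.2 hω)
  have htranslate := hB.setLIntegral_matsumotoYorPair ht (inv_nonneg.2 ha.le)
    (g := fun q => ENNReal.ofReal (a - q.1⁻¹)) (by fun_prop)
  simp only [matsumotoYorPair_eq, inv_inv] at htranslate
  rw [← setLIntegral_eq_of_support_subset hsupport, htranslate]
  refine lintegral_congr fun ω => ?_
  have hA := hB.A_pos ht ω
  have hsub : a - ((A B t ω)⁻¹ + a⁻¹)⁻¹ = a ^ 2 * (a + A B t ω)⁻¹ := by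
    field_simp
    ring
  have hexponent : 2 * (M B t ω / A B t ω ^ 2) * a⁻¹ / ((A B t ω)⁻¹ * ((A B t ω)⁻¹ + a⁻¹))
      - 2 * a⁻¹ = 2 * M B t ω / (a + A B t ω) - 2 / a := by
    field_simp
  rw [gigWeight_div_gigWeight_add (inv_pos.2 hA) (inv_nonneg.2 ha.le),
    ← ENNReal.ofReal_mul (exp_pos _).le]
  simp only [Prod.fst_add, hsub, hexponent]
  congr 1
  ring

lemma integral_max_sub_A (hB : IsBrownianMotion P B) {t : ℝ} (ht : 0 < t) {a : ℝ} (ha : 0 < a) :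
    ∫ ω, max (a - A B t ω) 0 ∂P
      = a ^ 2 * ∫ ω, (a + A B t ω)⁻¹ * exp (2 * M B t ω / (a + A B t ω) - 2 / a) ∂P := by
  have hA_meas := hB.measurable_A t
  have hM_meas := hB.measurable_M t
  have hput : 0 ≤ᵐ[P] fun ω => max (a - A B t ω) 0 := ae_of_all _ fun _ => le_max_right _ _
  have hnonneg : 0 ≤ᵐ[P] fun ω => a ^ 2 * ((a + A B t ω)⁻¹
      * exp (2 * M B t ω / (a + A B t ω) - 2 / a)) := ae_of_all _ fun ω => by
    have := hB.A_pos ht ω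
    positivity
  rw [← integral_const_mul, integral_eq_lintegral_of_nonneg_ae hput (by fun_prop),
    integral_eq_lintegral_of_nonneg_ae hnonneg (by fun_prop)]
  simp only [ENNReal.ofReal_max, ENNReal.ofReal_zero, zero_le, sup_of_le_left,
    hB.lintegral_sub_A ht ha]

end Translation

end IsBrownianMotion

variable (P B)

theorem expected_max (hB : IsBrownianMotion P B) (t a : ℝ) (ht : 0 < t) (ha : 0 < a) :
    (∫ ω, max (A B t ω - a) 0 ∂P)
      = t - a + a ^ 2 *
          ∫ ω, (a + A B t ω)⁻¹ *
                Real.exp (2 * M B t ω / (a + A B t ω) - 2 / a) ∂P := by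
  have := hB.isProbabilityMeasure
  have hA := hB.integrable_A ht.le
  have hput : Integrable (fun ω => max (a - A B t ω) 0) P :=
    ((integrable_const a).sub hA).pos_part
  have hforward : Integrable (fun ω => A B t ω - a) P := hA.sub (integrable_const a)
  calc ∫ ω, max (A B t ω - a) 0 ∂P
      = ∫ ω, (A B t ω - a + max (a - A B t ω) 0) ∂P := by
        congr with ω
        rw [← sub_eq_iff_eq_add, ← neg_sub (A B t ω) a]
        exact max_zero_sub_max_neg_zero_eq_self _
    _ = t - a + ∫ ω, max (a - A B t ω) 0 ∂P := by
        rw [integral_add hforward hput, integral_sub hA (integrable_const a),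
          hB.integral_A ht.le, integral_const, probReal_univ, one_smul]
    _ = _ := by rw [hB.integral_max_sub_A ht ha]
end
end

section
/- For every t > 0 and every a > 0, the function u ↦ E[ (A_t − u)^+ ] is differentiable at a with derivative −1 + e^{-2/a} · E[ exp( 2·exp(B_t − t/2) / (a + A_t) ) ]. -/
/-!
The `u`-derivative of `E[(A_t - u)^+]` at a non-atom `a` of `A_t` is `-P(A_t > a)`, so the formula
amounts to `P(A_t ≤ a) = E[exp (2 M_t / (a + A_t) - 2 / a)]`. The right-hand side is a Girsanov
density: for `a > 0` the diffusion `Z_s = M_s / (a + A_s)` and the diffusion `M_s / (A_s - a)`,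
which is negative exactly until `A` reaches `a`, are exchanged by `z ↦ -z` together with a change
of drift, with density `exp (2 (Z_t - Z_0))`. Hence the expectation is the probability that the
second one has not exploded by time `t`.

To avoid stochastic calculus, the exchange is carried out for an explicit Markov chain on a grid of
mesh `h = t / n`. One step sends `z` to `z e^x / (1 + h z e^{x/2})`, where `x` has law `N(-h/2, h)`;
the involution between the increments of the two chains, `x ↦ x - 2 log (1 + h z e^{x/2})`, maps
the Gaussian law to itself with an explicit density, whose products along the chain converge,
because the cubic variation of Brownian motion vanishes along a subsequence of meshes. The
resulting identity holds when `a` is not an atom of `A_t`; as the right-hand side is continuous in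
`a` and non-atoms are dense, `A_t` has no atoms in `(0, ∞)`.
-/

open MeasureTheory ProbabilityTheory Real Set

noncomputable section

variable {Ω : Type*} [MeasurableSpace Ω] (P : MeasureTheory.Measure Ω) (B : ℝ → Ω → ℝ)

open Filter Topology

section OneStep

/-- The logarithm `r` of `1 + κ e^{x/2}`; with `κ = h z` it is the amount by which an increment `x`
of the driving path over a time step `h` is shifted in state `z`. It is meant to be used on
`dualDomain κ`. -/
def logShift (κ x : ℝ) : ℝ := Real.log (1 + κ * Real.exp (x / 2))

/-- The increment `x - 2 r` dual to `x`. The map with parameter `-κ` is its inverse. -/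
def dualIncrement (κ x : ℝ) : ℝ := x - 2 * logShift κ x

/-- The increments `x` for which `1 + κ e^{x/2}` is positive: all of `ℝ` if `0 ≤ κ`, a left
half-line if `κ < 0`. -/
def dualDomain (κ : ℝ) : Set ℝ := {x | 0 < 1 + κ * Real.exp (x / 2)}

lemma measurableSet_dualDomain (κ : ℝ) : MeasurableSet (dualDomain κ) :=
  measurableSet_lt (by fun_prop) (by fun_prop)

lemma dualDomain_eq_univ {κ : ℝ} (hκ : 0 ≤ κ) : dualDomain κ = univ :=
  eq_univ_of_forall fun x => show 0 < 1 + κ * Real.exp (x / 2) by positivity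

lemma one_add_neg_mul_exp_dualIncrement {κ x : ℝ} (hx : x ∈ dualDomain κ) :
    1 + -κ * Real.exp (dualIncrement κ x / 2) = (1 + κ * Real.exp (x / 2))⁻¹ := by
  have hpos : 0 < 1 + κ * Real.exp (x / 2) := hx
  rw [show dualIncrement κ x / 2 = x / 2 - logShift κ x by unfold dualIncrement; ring,
    Real.exp_sub, logShift, Real.exp_log hpos]
  field_simp
  ring

lemma dualIncrement_mem_dualDomain_neg {κ x : ℝ} (hx : x ∈ dualDomain κ) :
    dualIncrement κ x ∈ dualDomain (-κ) := by
  simpa only [dualDomain, mem_ofPred_eq, one_add_neg_mul_exp_dualIncrement hx] using inv_pos.mpr hx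

lemma logShift_neg_dualIncrement {κ x : ℝ} (hx : x ∈ dualDomain κ) :
    logShift (-κ) (dualIncrement κ x) = -logShift κ x := by
  rw [logShift, one_add_neg_mul_exp_dualIncrement hx, Real.log_inv, logShift]

lemma dualIncrement_neg_dualIncrement {κ x : ℝ} (hx : x ∈ dualDomain κ) :
    dualIncrement (-κ) (dualIncrement κ x) = x := by
  rw [dualIncrement, logShift_neg_dualIncrement hx, dualIncrement]
  ring

lemma image_dualIncrement (κ : ℝ) : dualIncrement κ '' dualDomain κ = dualDomain (-κ) := by
  refine Subset.antisymm (image_subset_iff.2 fun x => dualIncrement_mem_dualDomain_neg)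
    fun y hy => ?_
  refine ⟨dualIncrement (-κ) y, ?_, ?_⟩
  · simpa only [neg_neg] using dualIncrement_mem_dualDomain_neg hy
  · simpa only [neg_neg] using dualIncrement_neg_dualIncrement hy

lemma injOn_dualIncrement (κ : ℝ) : InjOn (dualIncrement κ) (dualDomain κ) :=
  LeftInvOn.injOn fun _ => dualIncrement_neg_dualIncrement

lemma hasDerivAt_dualIncrement {κ x : ℝ} (hx : x ∈ dualDomain κ) :
    HasDerivAt (dualIncrement κ) (Real.exp (-logShift κ x)) x := by
  have hpos : 0 < 1 + κ * Real.exp (x / 2) := hx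
  have hinner : HasDerivAt (fun y : ℝ => 1 + κ * Real.exp (y / 2))
      (κ * (Real.exp (x / 2) * (1 / 2))) x :=
    (((hasDerivAt_id x).div_const 2).exp.const_mul κ).const_add 1
  refine ((hasDerivAt_id x).sub ((hinner.log hpos.ne').const_mul 2)).congr_deriv ?_
  rw [Real.exp_neg, logShift, Real.exp_log hpos]
  field_simp
  ring

-- The drift `-h/2` is what makes the Jacobian `e^{-r}` cancel against the Gaussian density ratio.
lemma gaussianPDFReal_eq_mul_dualIncrement {h : ℝ} (hh : 0 < h) (κ x : ℝ) :
    gaussianPDFReal (-h / 2) h.toNNReal x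
        * Real.exp (2 * logShift κ x * (x - logShift κ x) / h)
      = Real.exp (-logShift κ x) * gaussianPDFReal (-h / 2) h.toNNReal (dualIncrement κ x) := by
  unfold gaussianPDFReal dualIncrement
  rw [mul_assoc, mul_left_comm (Real.exp _), ← Real.exp_add, ← Real.exp_add,
    Real.coe_toNNReal _ hh.le]
  congr 2
  field_simp
  ring

lemma setLIntegral_gaussianReal (m : ℝ) {v : NNReal} (hv : v ≠ 0) {s : Set ℝ}
    (hs : MeasurableSet s) (g : ℝ → ENNReal) :
    ∫⁻ x in s, g x ∂gaussianReal m v = ∫⁻ x in s, gaussianPDF m v x * g x := by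
  rw [gaussianReal_of_var_ne_zero _ hv, restrict_withDensity hs,
    lintegral_withDensity_eq_lintegral_mul_non_measurable _ (measurable_gaussianPDF m v)
      (ae_of_all _ fun _ => gaussianPDF_lt_top)]
  rfl

lemma setLIntegral_comp_dualIncrement {h : ℝ} (hh : 0 < h) (κ : ℝ) (g : ℝ → ENNReal) :
    ∫⁻ x in dualDomain κ, ENNReal.ofReal (Real.exp (2 * logShift κ x * (x - logShift κ x) / h))
        * g (dualIncrement κ x) ∂gaussianReal (-h / 2) h.toNNReal
      = ∫⁻ y in dualDomain (-κ), g y ∂gaussianReal (-h / 2) h.toNNReal := by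
  have hv : h.toNNReal ≠ 0 := by simpa using hh
  rw [setLIntegral_gaussianReal _ hv (measurableSet_dualDomain κ),
    setLIntegral_gaussianReal _ hv (measurableSet_dualDomain (-κ)), ← image_dualIncrement κ,
    lintegral_image_eq_lintegral_abs_deriv_mul (measurableSet_dualDomain κ)
      (fun x hx => (hasDerivAt_dualIncrement hx).hasDerivWithinAt) (injOn_dualIncrement κ)]
  refine lintegral_congr fun x => ?_
  rw [← mul_assoc, ← mul_assoc, gaussianPDF, gaussianPDF, abs_of_pos (Real.exp_pos _),
    ← ENNReal.ofReal_mul (gaussianPDFReal_nonneg _ _ _), ← ENNReal.ofReal_mul (Real.exp_pos _).le,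
    gaussianPDFReal_eq_mul_dualIncrement hh]

end OneStep

section GridChain

/-- One step, over a time interval of length `h`, of the chain with state `(z, ℓ)` driven by the
increment `x`. Along a path `b` with `b 0 = 0` started at `(1 / c, 0)`, the component `z`
approximates `e^b / (c + ∫ e^b)`, and `ℓ` accumulates the exponents of the density of the
one-step change of variables `dualIncrement`. -/
def gridStep (h : ℝ) (s : ℝ × ℝ) (x : ℝ) : ℝ × ℝ :=
  (s.1 * Real.exp x / (1 + h * s.1 * Real.exp (x / 2)),
    s.2 + 2 * logShift (h * s.1) x * (x - logShift (h * s.1) x) / h)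

/-- The state after `n` steps of the chain `gridStep h` started at `s₀` and driven by `x`. -/
def gridState (h : ℝ) (s₀ : ℝ × ℝ) (x : ℕ → ℝ) : ℕ → ℝ × ℝ
  | 0 => s₀
  | n + 1 => gridStep h (gridState h s₀ x n) (x n)

lemma measurable_gridStep (h : ℝ) : Measurable (Function.uncurry (gridStep h)) := by
  unfold gridStep logShift Function.uncurry
  fun_prop

lemma gridStep_fst_pos {h : ℝ} (hh : 0 ≤ h) {s : ℝ × ℝ} (hs : 0 < s.1) (x : ℝ) :
    0 < (gridStep h s x).1 := by
  unfold gridStep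
  positivity

lemma gridStep_fst_nonneg {h : ℝ} (hh : 0 ≤ h) {s : ℝ × ℝ} (hs : 0 ≤ s.1) (x : ℝ) :
    0 ≤ (gridStep h s x).1 := by
  unfold gridStep
  positivity

lemma gridStep_fst_neg_iff {h : ℝ} {s : ℝ × ℝ} (hs : s.1 < 0) (x : ℝ) :
    (gridStep h s x).1 < 0 ↔ x ∈ dualDomain (h * s.1) := by
  have hnum : s.1 * Real.exp x < 0 := mul_neg_of_neg_of_pos hs (Real.exp_pos x)
  simp only [gridStep, div_neg_iff, hnum, hnum.not_gt, false_and, true_and, false_or, dualDomain,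
    mem_ofPred_eq]

lemma gridState_fst_pos {h : ℝ} (hh : 0 ≤ h) {s₀ : ℝ × ℝ} (hs₀ : 0 < s₀.1) (x : ℕ → ℝ) (n : ℕ) :
    0 < (gridState h s₀ x n).1 := by
  induction n with
  | zero => exact hs₀
  | succ n ih => exact gridStep_fst_pos hh ih _

lemma neg_gridStep {h : ℝ} {s : ℝ × ℝ} {x : ℝ} (hx : x ∈ dualDomain (h * s.1)) :
    -gridStep h s x = gridStep h (-s) (dualIncrement (h * s.1) x) := by
  have hpos : 0 < 1 + h * s.1 * Real.exp (x / 2) := hx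
  have hinv : 1 + h * -s.1 * Real.exp (dualIncrement (h * s.1) x / 2)
      = (1 + h * s.1 * Real.exp (x / 2))⁻¹ := by
    rw [mul_neg, one_add_neg_mul_exp_dualIncrement hx]
  have hexp : Real.exp (dualIncrement (h * s.1) x)
      = Real.exp x / (1 + h * s.1 * Real.exp (x / 2)) ^ 2 := by
    rw [dualIncrement, Real.exp_sub, mul_comm, Real.exp_mul, logShift, Real.exp_log hpos,
      Real.rpow_two]
  ext
  · simp only [gridStep, Prod.fst_neg, hinv, hexp]
    field_simp
  · simp only [gridStep, Prod.snd_neg, Prod.fst_neg, mul_neg, logShift_neg_dualIncrement hx]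
    unfold dualIncrement
    ring

end GridChain

section Independence

variable {Ω E F : Type*} [MeasurableSpace E] [MeasurableSpace F]
  {X : ℕ → Ω → E} {S : ℕ → Ω → F} {step : F → E → F} {s₀ : F}

lemma measurable_recursion {mΩ : MeasurableSpace Ω} (hstep : Measurable (Function.uncurry step))
    (h0 : ∀ ω, S 0 ω = s₀) (hS : ∀ n ω, S (n + 1) ω = step (S n ω) (X n ω)) (n : ℕ)
    (hX : ∀ k < n, Measurable (X k)) : Measurable (S n) := by
  induction n with
  | zero => simpa only [funext h0] using measurable_const
  | succ n ih =>
    rw [funext (hS n)]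
    exact hstep.comp ((ih fun k hk => hX k (hk.trans n.lt_succ_self)).prodMk (hX n n.lt_succ_self))

variable [MeasurableSpace Ω] {μ : Measure Ω}

lemma indepFun_recursion (hstep : Measurable (Function.uncurry step))
    (hX : ∀ n, Measurable (X n)) (hindep : iIndepFun X μ) (h0 : ∀ ω, S 0 ω = s₀)
    (hS : ∀ n ω, S (n + 1) ω = step (S n ω) (X n ω)) (n : ℕ) : IndepFun (S n) (X n) μ := by
  have hpast : Measurable[⨆ k ∈ Iio n, MeasurableSpace.comap (X k) inferInstance] (S n) :=
    measurable_recursion hstep h0 hS n fun k hk => (comap_measurable (X k)).mono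
      (le_iSup₂ (f := fun i (_ : i ∈ Iio n) => MeasurableSpace.comap (X i) inferInstance) k hk)
      le_rfl
  have hdisj := indep_iSup_of_disjoint (fun k => (hX k).comap_le) hindep
    (S := Iio n) (T := {n}) (by simp)
  rw [iSup_singleton] at hdisj
  exact indep_of_indep_of_le_left hdisj hpast.comap_le

lemma lintegral_recursion_succ {γ : Measure E} [SFinite γ]
    (hstep : Measurable (Function.uncurry step))
    (hX : ∀ n, Measurable (X n)) (hindep : iIndepFun X μ) (hlaw : ∀ n, μ.map (X n) = γ)
    (h0 : ∀ ω, S 0 ω = s₀) (hS : ∀ n ω, S (n + 1) ω = step (S n ω) (X n ω)) {f : F → ENNReal}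
    (hf : Measurable f) (n : ℕ) :
    ∫⁻ ω, f (S (n + 1) ω) ∂μ = ∫⁻ ω, ∫⁻ x, f (step (S n ω) x) ∂γ ∂μ := by
  have := hindep.isProbabilityMeasure
  have hSn := measurable_recursion hstep h0 hS n fun k _ => hX k
  have hjoint : μ.map (fun ω => (S n ω, X n ω)) = (μ.map (S n)).prod γ := by
    rw [← hlaw n]
    exact (indepFun_iff_map_prod_eq_prod_map_map hSn.aemeasurable (hX n).aemeasurable).1
      (indepFun_recursion hstep hX hindep h0 hS n)
  have hfstep : Measurable fun p : F × E => f (step p.1 p.2) := hf.comp hstep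
  calc ∫⁻ ω, f (S (n + 1) ω) ∂μ
      = ∫⁻ p, f (step p.1 p.2) ∂μ.map (fun ω => (S n ω, X n ω)) := by
        rw [lintegral_map hfstep (hSn.prodMk (hX n))]
        simp only [hS]
    _ = ∫⁻ s, ∫⁻ x, f (step s x) ∂γ ∂μ.map (S n) := by
        rw [hjoint, lintegral_prod _ hfstep.aemeasurable]
    _ = ∫⁻ ω, ∫⁻ x, f (step (S n ω) x) ∂γ ∂μ :=
        lintegral_map hfstep.lintegral_prod_right' hSn

end Independence

section DiscreteDuality

variable {h : ℝ}

lemma lintegral_gridStep_eq (hh : 0 < h) {s : ℝ × ℝ} (hs : 0 < s.1) (g : ℝ × ℝ → ENNReal) :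
    ∫⁻ x, ENNReal.ofReal (Real.exp (gridStep h s x).2) * g (-gridStep h s x)
        ∂gaussianReal (-h / 2) h.toNNReal
      = ENNReal.ofReal (Real.exp s.2) *
        ∫⁻ y, {s | s.1 < 0}.indicator g (gridStep h (-s) y) ∂gaussianReal (-h / 2) h.toNNReal := by
  set κ := h * s.1
  have hdom : dualDomain κ = univ := dualDomain_eq_univ (mul_pos hh hs).le
  have hneg : ∀ y, {s : ℝ × ℝ | s.1 < 0}.indicator g (gridStep h (-s) y)
      = (dualDomain (-κ)).indicator (fun y => g (gridStep h (-s) y)) y := fun y => by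
    have hiff := gridStep_fst_neg_iff (h := h) (s := -s) (neg_lt_zero.2 hs) y
    rw [Prod.fst_neg, mul_neg] at hiff
    exact indicator_eq_indicator hiff rfl
  have hdens : ∀ x, ENNReal.ofReal (Real.exp (gridStep h s x).2) * g (-gridStep h s x)
      = ENNReal.ofReal (Real.exp s.2) *
        (ENNReal.ofReal (Real.exp (2 * logShift κ x * (x - logShift κ x) / h))
          * g (gridStep h (-s) (dualIncrement κ x))) := fun x => by
    rw [neg_gridStep (hdom ▸ mem_univ x), ← mul_assoc,
      ← ENNReal.ofReal_mul (Real.exp_pos _).le, ← Real.exp_add]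
    rfl
  simp only [hneg, hdens]
  rw [lintegral_const_mul' _ _ ENNReal.ofReal_ne_top,
    lintegral_indicator (measurableSet_dualDomain _), ← setLIntegral_comp_dualIncrement hh, hdom,
    Measure.restrict_univ]

variable {Ω : Type*} [MeasurableSpace Ω] {μ : Measure Ω} {X : ℕ → Ω → ℝ}

lemma lintegral_gridState_dual (hh : 0 < h) {z : ℝ} (hz : 0 < z) (hX : ∀ k, Measurable (X k))
    (hindep : iIndepFun X μ) (hlaw : ∀ k, μ.map (X k) = gaussianReal (-h / 2) h.toNNReal)
    (n : ℕ) {g : ℝ × ℝ → ENNReal} (hg : Measurable g) :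
    ∫⁻ ω, ENNReal.ofReal (Real.exp (gridState h (z, 0) (fun k => X k ω) n).2)
        * g (-gridState h (z, 0) (fun k => X k ω) n) ∂μ
      = ∫⁻ ω, {s | s.1 < 0}.indicator g (gridState h (-z, 0) (fun k => X k ω) n) ∂μ := by
  have hneg : MeasurableSet {s : ℝ × ℝ | s.1 < 0} :=
    measurableSet_lt measurable_fst measurable_const
  have hsucc : ∀ s₀ {f : ℝ × ℝ → ENNReal}, Measurable f → ∀ n,
      ∫⁻ ω, f (gridState h s₀ (fun k => X k ω) (n + 1)) ∂μ = ∫⁻ ω, ∫⁻ x,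
        f (gridStep h (gridState h s₀ (fun k => X k ω) n) x)
          ∂gaussianReal (-h / 2) h.toNNReal ∂μ := fun s₀ f hf n =>
    lintegral_recursion_succ (S := fun n ω => gridState h s₀ (fun k => X k ω) n)
      (measurable_gridStep h) hX hindep hlaw (fun _ => rfl) (fun _ _ => rfl) hf n
  induction n generalizing g with
  | zero => simp [gridState, hz]
  | succ n ih =>
    set G : ℝ × ℝ → ENNReal := fun s =>
      ∫⁻ y, {s | s.1 < 0}.indicator g (gridStep h s y) ∂gaussianReal (-h / 2) h.toNNReal
    have hGmeas : Measurable G :=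
      ((hg.indicator hneg).comp (measurable_gridStep h)).lintegral_prod_right'
    have hGzero : {s : ℝ × ℝ | s.1 < 0}.indicator G = G := indicator_eq_self.2 fun s hs => by
      by_contra hs0
      refine hs (lintegral_eq_zero_of_ae_eq_zero (ae_of_all _ fun y => ?_))
      exact indicator_of_notMem (s := {s : ℝ × ℝ | s.1 < 0})
        (gridStep_fst_nonneg hh.le (not_lt.1 hs0) y).not_gt _
    rw [hsucc (z, 0) (f := fun s => ENNReal.ofReal (Real.exp s.2) * g (-s)) (by fun_prop),
      hsucc (-z, 0) (hg.indicator hneg)]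
    simp only [lintegral_gridStep_eq hh (gridState_fst_pos hh.le (s₀ := (z, 0)) hz _ n)]
    rw [ih hGmeas, hGzero]

end DiscreteDuality

section ClosedForm

/-- The midpoint sum of step `h`, in the exponent, for the integral of the exponential of a path
sampled at `b 0, b 1, …`. -/
def midpointSum (h : ℝ) (b : ℕ → ℝ) (n : ℕ) : ℝ :=
  ∑ k ∈ Finset.range n, h * Real.exp ((b k + b (k + 1)) / 2)

variable {h c : ℝ} {b : ℕ → ℝ} {n : ℕ}

lemma midpointSum_zero (h : ℝ) (b : ℕ → ℝ) : midpointSum h b 0 = 0 := Finset.sum_range_zero _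

lemma midpointSum_succ (h : ℝ) (b : ℕ → ℝ) (n : ℕ) :
    midpointSum h b (n + 1) = midpointSum h b n + h * Real.exp ((b n + b (n + 1)) / 2) :=
  Finset.sum_range_succ _ _

lemma monotone_midpointSum (hh : 0 ≤ h) (b : ℕ → ℝ) : Monotone (midpointSum h b) :=
  monotone_nat_of_le_succ fun n => by
    rw [midpointSum_succ]
    exact le_add_of_nonneg_right (by positivity)

lemma midpointSum_nonneg (hh : 0 ≤ h) (b : ℕ → ℝ) (n : ℕ) : 0 ≤ midpointSum h b n :=
  midpointSum_zero h b ▸ monotone_midpointSum hh b n.zero_le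

lemma exp_add_div_two (x y : ℝ) :
    Real.exp ((x + y) / 2) = Real.exp x * Real.exp ((y - x) / 2) := by
  rw [← Real.exp_add]
  ring_nf

lemma gridState_fst_eq (hb : b 0 = 0) (hc : ∀ k < n, c + midpointSum h b k ≠ 0) :
    (gridState h (1 / c, 0) (fun k => b (k + 1) - b k) n).1
      = Real.exp (b n) / (c + midpointSum h b n) := by
  induction n with
  | zero => simp [gridState, hb, midpointSum_zero]
  | succ n ih =>
    have hn := hc n n.lt_succ_self
    rw [gridState, gridStep, ih fun k hk => hc k (hk.trans n.lt_succ_self), midpointSum_succ,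
      exp_add_div_two, Real.exp_sub]
    field_simp
    ring_nf

lemma one_add_mul_gridState_fst (hb : b 0 = 0) (hc : ∀ k ≤ n, c + midpointSum h b k ≠ 0) :
    1 + h * (gridState h (1 / c, 0) (fun k => b (k + 1) - b k) n).1
        * Real.exp ((b (n + 1) - b n) / 2)
      = (c + midpointSum h b (n + 1)) / (c + midpointSum h b n) := by
  have hn := hc n le_rfl
  rw [gridState_fst_eq hb fun k hk => hc k hk.le, midpointSum_succ, exp_add_div_two]
  field_simp
  ring

lemma gridState_fst_nonneg_of_le {x : ℕ → ℝ} {s₀ : ℝ × ℝ} (hh : 0 ≤ h) {k : ℕ}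
    (hk : 0 ≤ (gridState h s₀ x k).1) (hkn : k ≤ n) : 0 ≤ (gridState h s₀ x n).1 :=
  Nat.le_induction hk (fun _ _ ih => gridStep_fst_nonneg hh ih _) n hkn

lemma gridState_fst_neg_iff (hh : 0 ≤ h) (a : ℝ) (hb : b 0 = 0) :
    (gridState h (1 / -a, 0) (fun k => b (k + 1) - b k) n).1 < 0 ↔ midpointSum h b n < a := by
  refine ⟨fun hneg => ?_, fun hlt => ?_⟩
  · by_contra! hge
    classical
    have hex : ∃ k, a ≤ midpointSum h b k := ⟨n, hge⟩
    have hbefore : ∀ k < Nat.find hex, -a + midpointSum h b k ≠ 0 := fun k hk => by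
      linarith [not_le.1 (Nat.find_min hex hk)]
    have hpassage := gridState_fst_eq hb hbefore
    refine (gridState_fst_nonneg_of_le hh ?_ (Nat.find_min' hex hge)).not_gt hneg
    rw [hpassage]
    exact div_nonneg (Real.exp_pos _).le (by linarith [Nat.find_spec hex])
  · have hbelow : ∀ k ≤ n, -a + midpointSum h b k < 0 := fun k hk => by
      linarith [monotone_midpointSum hh b hk]
    rw [gridState_fst_eq hb fun k hk => (hbelow k hk.le).ne]
    exact div_neg_of_pos_of_neg (Real.exp_pos _) (hbelow n le_rfl)

end ClosedForm

section ErrorEstimate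

lemma abs_sinh_sub_self_le {y : ℝ} (hy : |y| ≤ 1) : |Real.sinh y - y| ≤ |y| ^ 3 := by
  have hpos := abs_le.1 (Real.exp_bound (x := y) hy (n := 3) (by norm_num))
  have hneg := abs_le.1 (Real.exp_bound (x := -y) (by rwa [abs_neg]) (n := 3) (by norm_num))
  norm_num [Finset.sum_range_succ, Nat.factorial] at hpos hneg
  have hcube : 0 ≤ |y| ^ 3 := by positivity
  rw [Real.sinh_eq, abs_le]
  constructor <;> linarith [hpos.1, hpos.2, hneg.1, hneg.2, hcube]

lemma abs_two_mul_sinh_half_sub_self_le {y : ℝ} (hy : |y| ≤ 1) :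
    |2 * Real.sinh (y / 2) - y| ≤ |y| ^ 3 / 4 := by
  have hhalf : |y / 2| = |y| / 2 := by rw [abs_div, abs_two]
  have hsinh := abs_sinh_sub_self_le (y := y / 2) (by rw [hhalf]; linarith)
  rw [show 2 * Real.sinh (y / 2) - y = 2 * (Real.sinh (y / 2) - y / 2) by ring, abs_mul, abs_two]
  rw [hhalf] at hsinh
  linarith [show (|y| / 2) ^ 3 = |y| ^ 3 / 8 by ring]

lemma abs_le_abs_two_mul_sinh_half (y : ℝ) : |y| ≤ |2 * Real.sinh (y / 2)| := by
  rw [abs_mul, abs_two, Real.abs_sinh, abs_div, abs_two]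
  linarith [Real.self_le_sinh_iff.2 (show 0 ≤ |y| / 2 by positivity)]

lemma abs_mul_sub_mul_sinh_le {r δ : ℝ} (hr : |r| ≤ 1) (hδ : |δ| ≤ 1) :
    |r * δ - 2 * Real.sinh (r / 2) * (2 * Real.sinh (δ / 2))|
      ≤ |r| * |δ| ^ 3 / 4 + |r| ^ 3 * |δ| / 2 := by
  set p := 2 * Real.sinh (r / 2)
  set q := 2 * Real.sinh (δ / 2)
  have hp : |p - r| ≤ |r| ^ 3 / 4 := abs_two_mul_sinh_half_sub_self_le hr
  have hq : |q - δ| ≤ |δ| ^ 3 / 4 := abs_two_mul_sinh_half_sub_self_le hδ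
  have hδ3 : |δ| ^ 3 ≤ |δ| := pow_le_of_le_one (abs_nonneg δ) hδ three_ne_zero
  have hq2 : |q| ≤ 2 * |δ| := by linarith [abs_sub_abs_le_abs_sub q δ, abs_nonneg δ]
  calc |r * δ - p * q| = |r * (q - δ) + (p - r) * q| := by rw [← abs_neg]; ring_nf
    _ ≤ |r| * |q - δ| + |p - r| * |q| := by
        simpa only [abs_mul] using abs_add_le (r * (q - δ)) ((p - r) * q)
    _ ≤ |r| * (|δ| ^ 3 / 4) + |r| ^ 3 / 4 * (2 * |δ|) := by gcongr
    _ = |r| * |δ| ^ 3 / 4 + |r| ^ 3 * |δ| / 2 := by ring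

variable {h K : ℝ}

lemma gridStep_fst_eq_mul_exp {s : ℝ × ℝ} {x : ℝ} (hx : x ∈ dualDomain (h * s.1)) :
    (gridStep h s x).1 = s.1 * Real.exp (x - logShift (h * s.1) x) := by
  rw [Real.exp_sub, logShift, Real.exp_log hx, gridStep, mul_div_assoc]

lemma two_mul_sinh_half_logShift {κ x : ℝ} (hx : x ∈ dualDomain κ) :
    2 * Real.sinh (logShift κ x / 2) = κ * Real.exp ((x - logShift κ x) / 2) := by
  have hexp : Real.exp (logShift κ x / 2) * Real.exp (logShift κ x / 2)
      = 1 + κ * Real.exp (x / 2) := by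
    rw [← Real.exp_add, add_halves, logShift, Real.exp_log hx]
  rw [Real.sinh_eq, Real.exp_neg, show (x - logShift κ x) / 2 = x / 2 - logShift κ x / 2 by ring,
    Real.exp_sub]
  field_simp
  linarith

lemma mul_exp_half_mul_sinh_half (z δ : ℝ) :
    z * Real.exp (δ / 2) * (2 * Real.sinh (δ / 2)) = z * Real.exp δ - z := by
  have hsq : Real.exp δ = Real.exp (δ / 2) * Real.exp (δ / 2) := by rw [← Real.exp_add, add_halves]
  rw [Real.sinh_eq, Real.exp_neg, hsq]
  field_simp

lemma abs_logShift_le (hh : 0 < h) {s : ℝ × ℝ} {x : ℝ} (hx : x ∈ dualDomain (h * s.1))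
    (hs : |s.1| ≤ K) (hs' : |(gridStep h s x).1| ≤ K) : |logShift (h * s.1) x| ≤ h * K := by
  have hK : 0 ≤ K := (abs_nonneg _).trans hs
  refine (abs_le_abs_two_mul_sinh_half _).trans (abs_le_of_sq_le_sq ?_ (by positivity))
  calc (2 * Real.sinh (logShift (h * s.1) x / 2)) ^ 2
      = h ^ 2 * (s.1 * (gridStep h s x).1) := by
        rw [two_mul_sinh_half_logShift hx, gridStep_fst_eq_mul_exp hx, mul_pow, ← Real.exp_nat_mul]
        ring_nf
    _ ≤ h ^ 2 * |s.1 * (gridStep h s x).1| := by gcongr; exact le_abs_self _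
    _ ≤ h ^ 2 * (K * K) := by rw [abs_mul]; gcongr
    _ = (h * K) ^ 2 := by ring

-- With `r = logShift (h z) x` and `δ = x - r`, the product `2 sinh (r/2) * 2 sinh (δ/2)` is
-- exactly `h (z' - z)`, so the increment `2 r δ / h` of `ℓ` is `2 (z' - z)` up to the cubic error
-- of `sinh`.
lemma abs_gridStep_snd_sub_le (hh : 0 < h) {s : ℝ × ℝ} {x : ℝ} (hx : x ∈ dualDomain (h * s.1))
    (hs : |s.1| ≤ K) (hs' : |(gridStep h s x).1| ≤ K) (hK : h * K ≤ 1 / 2) (hx2 : |x| ≤ 1 / 2) :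
    |((gridStep h s x).2 - s.2) - 2 * ((gridStep h s x).1 - s.1)|
      ≤ 2 * K * |x| ^ 3 + 2 * K ^ 3 * h ^ 2 := by
  have hK0 : 0 ≤ K := (abs_nonneg _).trans hs
  have hr : |logShift (h * s.1) x| ≤ h * K := abs_logShift_le hh hx hs hs'
  set r := logShift (h * s.1) x with hr_def
  set δ := x - r with hδ_def
  have hδ : |δ| ≤ |x| + h * K := (abs_sub x r).trans (by gcongr)
  have hδ3 : |δ| ^ 3 ≤ 4 * (|x| ^ 3 + (h * K) ^ 3) := by
    refine (pow_le_pow_left₀ (abs_nonneg δ) hδ 3).trans ?_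
    exact (add_pow_le (abs_nonneg x) (by positivity) 3).trans_eq (by norm_num)
  have hprod : 2 * Real.sinh (r / 2) * (2 * Real.sinh (δ / 2))
      = h * ((gridStep h s x).1 - s.1) := by
    rw [two_mul_sinh_half_logShift hx, mul_assoc h, mul_assoc h, mul_exp_half_mul_sinh_half,
      gridStep_fst_eq_mul_exp hx]
  have hmul := abs_mul_sub_mul_sinh_le (r := r) (δ := δ) (by linarith) (by linarith)
  have hscale : ((gridStep h s x).2 - s.2) - 2 * ((gridStep h s x).1 - s.1)
      = 2 / h * (r * δ - 2 * Real.sinh (r / 2) * (2 * Real.sinh (δ / 2))) := by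
    rw [hprod, gridStep, ← hr_def, ← hδ_def]
    field_simp
    ring
  calc |((gridStep h s x).2 - s.2) - 2 * ((gridStep h s x).1 - s.1)|
      ≤ 2 / h * ((h * K) * (4 * (|x| ^ 3 + (h * K) ^ 3)) / 4 + (h * K) ^ 3 * 1 / 2) := by
        rw [hscale, abs_mul, abs_of_pos (by positivity : 0 < 2 / h)]
        refine mul_le_mul_of_nonneg_left (hmul.trans ?_) (by positivity)
        gcongr
        linarith
    _ = 2 * K * |x| ^ 3 + K ^ 3 * h ^ 2 * (2 * (h * K) + 1) := by field_simp; ring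
    _ ≤ 2 * K * |x| ^ 3 + K ^ 3 * h ^ 2 * (2 * (1 / 2) + 1) := by gcongr
    _ = 2 * K * |x| ^ 3 + 2 * K ^ 3 * h ^ 2 := by ring

lemma abs_gridState_snd_sub_le (hh : 0 < h) {s₀ : ℝ × ℝ} {x : ℕ → ℝ} {n : ℕ}
    (hx : ∀ k < n, x k ∈ dualDomain (h * (gridState h s₀ x k).1))
    (hs : ∀ k ≤ n, |(gridState h s₀ x k).1| ≤ K) (hK : h * K ≤ 1 / 2)
    (hx2 : ∀ k < n, |x k| ≤ 1 / 2) :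
    |((gridState h s₀ x n).2 - s₀.2) - 2 * ((gridState h s₀ x n).1 - s₀.1)|
      ≤ 2 * K * ∑ k ∈ Finset.range n, |x k| ^ 3 + n * (2 * K ^ 3 * h ^ 2) := by
  induction n with
  | zero => simp [gridState]
  | succ n ih =>
    have hprev := ih (fun k hk => hx k (hk.trans n.lt_succ_self))
      (fun k hk => hs k (hk.trans n.le_succ)) (fun k hk => hx2 k (hk.trans n.lt_succ_self))
    have hlast := abs_gridStep_snd_sub_le hh (hx n n.lt_succ_self) (hs n n.le_succ)
      (hs (n + 1) le_rfl) hK (hx2 n n.lt_succ_self)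
    rw [Finset.sum_range_succ, gridState]
    push_cast
    rw [abs_le] at hprev hlast ⊢
    constructor <;> linarith

end ErrorEstimate

section RiemannSums

lemma abs_riemannSum_sub_integral_le {ψ : ℝ → ℝ} (hψ : Continuous ψ) {h ε : ℝ} (hh : 0 ≤ h)
    {n : ℕ} {ξ : ℕ → ℝ} (hξ : ∀ k < n, ξ k ∈ Icc (k * h) ((k + 1 : ℕ) * h))
    (hosc : ∀ x ∈ Icc 0 (n * h), ∀ y ∈ Icc 0 (n * h), |x - y| ≤ h → |ψ x - ψ y| ≤ ε) :
    |∑ k ∈ Finset.range n, h * ψ (ξ k) - ∫ s in (0 : ℝ)..n * h, ψ s| ≤ n * (ε * h) := by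
  have hsplit : ∫ s in (0 : ℝ)..n * h, ψ s
      = ∑ k ∈ Finset.range n, ∫ s in (k * h)..((k + 1 : ℕ) * h), ψ s := by
    rw [intervalIntegral.sum_integral_adjacent_intervals (a := fun k : ℕ => (k : ℝ) * h)
      fun _ _ => hψ.intervalIntegrable _ _, Nat.cast_zero, zero_mul]
  have hcell : ∀ k ∈ Finset.range n,
      ‖h * ψ (ξ k) - ∫ s in (k * h)..((k + 1 : ℕ) * h), ψ s‖ ≤ ε * h := by
    intro k hk
    have hkn : k < n := Finset.mem_range.1 hk
    have hlen : ((k + 1 : ℕ) : ℝ) * h - k * h = h := by push_cast; ring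
    have hcell_sub : Icc (k * h) ((k + 1 : ℕ) * h) ⊆ Icc 0 (n * h) :=
      Icc_subset_Icc (by positivity) (by gcongr; exact hkn)
    have hconst : h * ψ (ξ k) = ∫ _ in (k * h)..((k + 1 : ℕ) * h), ψ (ξ k) := by
      rw [intervalIntegral.integral_const, hlen, smul_eq_mul]
    rw [hconst, ← intervalIntegral.integral_sub intervalIntegrable_const
      (hψ.intervalIntegrable _ _)]
    refine (intervalIntegral.norm_integral_le_of_norm_le_const fun s hs => ?_).trans_eq
      (by rw [hlen, abs_of_nonneg hh])
    have hs' : s ∈ Icc (k * h) ((k + 1 : ℕ) * h) :=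
      Ioc_subset_Icc_self (by rwa [uIoc_of_le (by linarith)] at hs)
    have hξk := hξ k hkn
    refine hosc _ (hcell_sub hξk) _ (hcell_sub hs') (abs_le.2 ⟨?_, ?_⟩) <;>
      linarith [hs'.1, hs'.2, hξk.1, hξk.2]
  rw [hsplit, ← Finset.sum_sub_distrib]
  exact (norm_sum_le_of_le _ hcell).trans_eq (by
    rw [Finset.sum_const, Finset.card_range, nsmul_eq_mul])

lemma tendsto_riemannSum {ψ : ℝ → ℝ} (hψ : Continuous ψ) {t : ℝ} (ht : 0 ≤ t) {ξ : ℕ → ℕ → ℝ}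
    (hξ : ∀ n : ℕ, ∀ k < n, ξ n k ∈ Icc (k * (t / n)) ((k + 1 : ℕ) * (t / n))) :
    Tendsto (fun n : ℕ => ∑ k ∈ Finset.range n, t / n * ψ (ξ n k)) atTop
      (𝓝 (∫ s in (0 : ℝ)..t, ψ s)) := by
  rw [Metric.tendsto_nhds]
  intro ε hε
  obtain ⟨δ, hδ, hunif⟩ := Metric.uniformContinuousOn_iff_le.1
    (isCompact_Icc.uniformContinuousOn_of_continuous (s := Icc 0 t) hψ.continuousOn)
    (ε / (t + 1)) (by positivity)
  filter_upwards [(tendsto_const_div_atTop_nhds_zero_nat t).eventually_lt_const hδ,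
    eventually_gt_atTop 0] with n hn hn0
  have hnt : n * (t / n) = t := mul_div_cancel₀ t (by positivity)
  have hbound := abs_riemannSum_sub_integral_le hψ (h := t / n) (by positivity) (hξ n)
    (ε := ε / (t + 1)) fun x hx y hy hxy => by
      rw [hnt] at hx hy
      exact hunif x hx y hy (hxy.trans hn.le)
  rw [hnt] at hbound
  calc |∑ k ∈ Finset.range n, t / n * ψ (ξ n k) - ∫ s in (0 : ℝ)..t, ψ s|
      ≤ ε / (t + 1) * (n * (t / n)) := hbound.trans_eq (by ring)
    _ < ε := by
      rw [hnt, div_mul_eq_mul_div, div_lt_iff₀ (by positivity)]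
      exact mul_lt_mul_of_pos_left (lt_add_one t) hε

/-- The values of the path `β` at the grid points `0, t/n, 2t/n, …`. -/
def gridValue (β : ℝ → ℝ) (t : ℝ) (n k : ℕ) : ℝ := β (k * (t / n))

lemma tendsto_midpointSum {β : ℝ → ℝ} (hβ : Continuous β) {t : ℝ} (ht : 0 ≤ t) :
    Tendsto (fun n : ℕ => midpointSum (t / n) (gridValue β t n) n) atTop
      (𝓝 (∫ s in (0 : ℝ)..t, Real.exp (β s))) := by
  have htag : ∀ n k : ℕ, ∃ ξ ∈ Icc (k * (t / n)) ((k + 1 : ℕ) * (t / n)),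
      β ξ = (gridValue β t n k + gridValue β t n (k + 1)) / 2 := by
    intro n k
    have hle : k * (t / n) ≤ (k + 1 : ℕ) * (t / n) := by gcongr; exact k.le_succ
    rw [← uIcc_of_le hle]
    refine intermediate_value_uIcc hβ.continuousOn (mem_uIcc.2 ?_)
    simp only [gridValue]
    rcases le_total (β (k * (t / n))) (β ((k + 1 : ℕ) * (t / n))) with hle | hle
    · exact Or.inl ⟨by linarith, by linarith⟩
    · exact Or.inr ⟨by linarith, by linarith⟩
  choose ξ hξ hβξ using htag
  simpa only [midpointSum, hβξ] using
    tendsto_riemannSum (ψ := fun s => Real.exp (β s)) (by fun_prop) ht fun n k _ => hξ n k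

end RiemannSums

section PathLimit

variable {h c m : ℝ} {b : ℕ → ℝ} {n : ℕ}

lemma le_abs_add_midpointSum (hh : 0 ≤ h) (hm : m ≤ c ∨ c + midpointSum h b n ≤ -m) {k : ℕ}
    (hk : k ≤ n) : m ≤ |c + midpointSum h b k| := by
  rcases hm with hm | hm
  · exact le_abs.2 (Or.inl (by linarith [midpointSum_nonneg hh b k]))
  · exact le_abs.2 (Or.inr (by linarith [monotone_midpointSum hh b hk]))

lemma add_midpointSum_succ_div_pos (hh : 0 ≤ h) (hm0 : 0 < m)
    (hm : m ≤ c ∨ c + midpointSum h b n ≤ -m) {k : ℕ} (hk : k < n) :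
    0 < (c + midpointSum h b (k + 1)) / (c + midpointSum h b k) := by
  rcases hm with hm | hm
  · exact div_pos (by linarith [midpointSum_nonneg hh b (k + 1)])
      (by linarith [midpointSum_nonneg hh b k])
  · exact div_pos_of_neg_of_neg (by linarith [monotone_midpointSum hh b (Nat.succ_le_of_lt hk)])
      (by linarith [monotone_midpointSum hh b hk.le])

lemma abs_gridState_snd_sub_le_of_path {E : ℝ} (hh : 0 < h) (hb : b 0 = 0) (hm0 : 0 < m)
    (hm : m ≤ c ∨ c + midpointSum h b n ≤ -m) (hE : ∀ k ≤ n, Real.exp (b k) ≤ E)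
    (hEm : h * (E / m) ≤ 1 / 2) (hx : ∀ k < n, |b (k + 1) - b k| ≤ 1 / 2) :
    |(gridState h (1 / c, 0) (fun k => b (k + 1) - b k) n).2
        - 2 * (Real.exp (b n) / (c + midpointSum h b n) - 1 / c)|
      ≤ 2 * (E / m) * ∑ k ∈ Finset.range n, |b (k + 1) - b k| ^ 3
        + n * (2 * (E / m) ^ 3 * h ^ 2) := by
  have hne : ∀ k ≤ n, c + midpointSum h b k ≠ 0 := fun k hk =>
    abs_pos.1 (hm0.trans_le (le_abs_add_midpointSum hh.le hm hk))
  have hfst : ∀ k ≤ n, (gridState h (1 / c, 0) (fun k => b (k + 1) - b k) k).1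
      = Real.exp (b k) / (c + midpointSum h b k) := fun k hk =>
    gridState_fst_eq hb fun j hj => hne j (hj.le.trans hk)
  have hbound := abs_gridState_snd_sub_le (s₀ := (1 / c, 0)) (K := E / m) hh
    (x := fun k => b (k + 1) - b k) (n := n)
    (fun k hk => by
      rw [dualDomain, mem_ofPred_eq,
        one_add_mul_gridState_fst hb fun j hj => hne j (hj.trans hk.le)]
      exact add_midpointSum_succ_div_pos hh.le hm0 hm hk)
    (fun k hk => by
      rw [hfst k hk, abs_div, Real.abs_exp]
      have hE0 : 0 ≤ E := (Real.exp_pos _).le.trans (hE k hk)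
      gcongr
      exacts [hE k hk, le_abs_add_midpointSum hh.le hm hk])
    hEm hx
  simpa only [hfst n le_rfl, sub_zero] using hbound

/-- The increments of the path `β` over the grid `0, t/n, 2t/n, …`. -/
def gridIncrement (β : ℝ → ℝ) (t : ℝ) (n k : ℕ) : ℝ :=
  gridValue β t n (k + 1) - gridValue β t n k

/-- The sum of the cubes of the absolute increments of the path `β` over the partition of `[0, t]`
into `n` equal intervals. -/
def cubicVariation (β : ℝ → ℝ) (t : ℝ) (n : ℕ) : ℝ :=
  ∑ k ∈ Finset.range n, |gridIncrement β t n k| ^ 3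

variable {β : ℝ → ℝ} {t : ℝ} {l : Filter ℕ}

lemma gridValue_zero (β : ℝ → ℝ) (t : ℝ) (n : ℕ) : gridValue β t n 0 = β 0 := by
  simp [gridValue]

lemma gridValue_self (β : ℝ → ℝ) (t : ℝ) {n : ℕ} (hn : 0 < n) : gridValue β t n n = β t := by
  rw [gridValue, mul_div_cancel₀ t (by positivity)]

lemma gridValue_mem_image (β : ℝ → ℝ) (ht : 0 ≤ t) {n k : ℕ} (hn : 0 < n) (hk : k ≤ n) :
    gridValue β t n k ∈ β '' Icc 0 t := by
  refine mem_image_of_mem β ⟨by positivity, ?_⟩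
  calc k * (t / n) ≤ n * (t / n) := by gcongr
    _ = t := mul_div_cancel₀ t (by positivity)

lemma abs_gridIncrement_le_of_cubicVariation_le {n k : ℕ} (hk : k < n) {ε : ℝ} (hε : 0 ≤ ε)
    (hV : cubicVariation β t n ≤ ε ^ 3) : |gridIncrement β t n k| ≤ ε := by
  refine le_of_pow_le_pow_left₀ three_ne_zero hε (le_trans ?_ hV)
  exact Finset.single_le_sum (f := fun k => |gridIncrement β t n k| ^ 3)
    (fun _ _ => by positivity) (Finset.mem_range.2 hk)

lemma eventually_le_or_add_midpointSum_le (hβ : Continuous β) (ht : 0 ≤ t)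
    (hc : 0 < c ∨ c + ∫ s in (0 : ℝ)..t, Real.exp (β s) < 0) :
    ∃ m > 0, ∀ᶠ n : ℕ in atTop, m ≤ c ∨ c + midpointSum (t / n) (gridValue β t n) n ≤ -m := by
  rcases hc with hc | hc
  · exact ⟨c, hc, Eventually.of_forall fun _ => Or.inl le_rfl⟩
  · refine ⟨-(c + ∫ s in (0 : ℝ)..t, Real.exp (β s)) / 2, by linarith, ?_⟩
    filter_upwards [((tendsto_midpointSum hβ ht).const_add c).eventually_lt_const
      (show _ < (c + ∫ s in (0 : ℝ)..t, Real.exp (β s)) / 2 by linarith)] with n hn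
    exact Or.inr (by linarith)

lemma tendsto_gridState_snd_sub (hβ : Continuous β) (hβ0 : β 0 = 0) (ht : 0 < t) (hl : l ≤ atTop)
    (hV : Tendsto (cubicVariation β t) l (𝓝 0))
    (hc : 0 < c ∨ c + ∫ s in (0 : ℝ)..t, Real.exp (β s) < 0) :
    Tendsto (fun n : ℕ => (gridState (t / n) (1 / c, 0) (gridIncrement β t n) n).2
      - 2 * (Real.exp (gridValue β t n n) / (c + midpointSum (t / n) (gridValue β t n) n) - 1 / c))
      l (𝓝 0) := by
  obtain ⟨m, hm0, hm⟩ := eventually_le_or_add_midpointSum_le hβ ht.le hc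
  obtain ⟨E, hE⟩ := isCompact_Icc.exists_bound_of_continuousOn (s := Icc 0 t)
    (f := fun s => Real.exp (β s)) (by fun_prop)
  have hmesh : Tendsto (fun n : ℕ => t / n) l (𝓝 0) :=
    (tendsto_const_div_atTop_nhds_zero_nat t).mono_left hl
  have hbound : Tendsto
      (fun n : ℕ => 2 * (E / m) * cubicVariation β t n + 2 * (E / m) ^ 3 * t * (t / n)) l
      (𝓝 0) := by
    simpa using (hV.const_mul (2 * (E / m))).add (hmesh.const_mul (2 * (E / m) ^ 3 * t))
  refine squeeze_zero_norm' ?_ hbound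
  filter_upwards [hm.filter_mono hl, (eventually_gt_atTop 0).filter_mono hl,
    hV.eventually_le_const (show 0 < (1 / 2 : ℝ) ^ 3 by norm_num),
    (hmesh.mul_const (E / m)).eventually_le_const (show 0 * (E / m) < 1 / 2 by norm_num)]
    with n hmn hn hVn hEn
  have hEn' : ∀ k ≤ n, Real.exp (gridValue β t n k) ≤ E := fun k hk => by
    obtain ⟨s, hs, hsk⟩ := gridValue_mem_image β ht.le hn hk
    exact hsk ▸ (le_abs_self _).trans (hE s hs)
  refine (abs_gridState_snd_sub_le_of_path (by positivity)
    ((gridValue_zero β t n).trans hβ0) hm0 hmn hEn' hEn fun k hk =>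
      abs_gridIncrement_le_of_cubicVariation_le hk (by norm_num) hVn).trans_eq ?_
  rw [cubicVariation]
  simp only [gridIncrement]
  field_simp

lemma tendsto_gridState_snd (hβ : Continuous β) (hβ0 : β 0 = 0) (ht : 0 < t) (hl : l ≤ atTop)
    (hV : Tendsto (cubicVariation β t) l (𝓝 0))
    (hc : 0 < c ∨ c + ∫ s in (0 : ℝ)..t, Real.exp (β s) < 0) :
    Tendsto (fun n : ℕ => (gridState (t / n) (1 / c, 0) (gridIncrement β t n) n).2) l
      (𝓝 (2 * (Real.exp (β t) / (c + ∫ s in (0 : ℝ)..t, Real.exp (β s)) - 1 / c))) := by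
  have hne : c + ∫ s in (0 : ℝ)..t, Real.exp (β s) ≠ 0 := by
    rcases hc with hc | hc
    · have : 0 ≤ ∫ s in (0 : ℝ)..t, Real.exp (β s) :=
        intervalIntegral.integral_nonneg ht.le fun s _ => (Real.exp_pos _).le
      positivity
    · exact hc.ne
  have hlast : (fun _ : ℕ => Real.exp (β t)) =ᶠ[l] fun n => Real.exp (gridValue β t n n) :=
    ((eventually_gt_atTop 0).filter_mono hl).mono fun n hn => by simp only [gridValue_self β t hn]
  have hfst : Tendsto (fun n : ℕ => 2 * (Real.exp (gridValue β t n n)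
      / (c + midpointSum (t / n) (gridValue β t n) n) - 1 / c)) l
      (𝓝 (2 * (Real.exp (β t) / (c + ∫ s in (0 : ℝ)..t, Real.exp (β s)) - 1 / c))) :=
    (((tendsto_const_nhds.congr' hlast).div
      (((tendsto_midpointSum hβ ht.le).mono_left hl).const_add c) hne).sub_const _).const_mul 2
  simpa only [sub_add_cancel, zero_add] using
    (tendsto_gridState_snd_sub hβ hβ0 ht hl hV hc).add hfst

lemma eventually_gridState_fst_neg_iff (hβ : Continuous β) (hβ0 : β 0 = 0) (ht : 0 < t) {a : ℝ}
    (ha : ∫ s in (0 : ℝ)..t, Real.exp (β s) ≠ a) :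
    ∀ᶠ n : ℕ in atTop, (gridState (t / n) (1 / -a, 0) (gridIncrement β t n) n).1 < 0
      ↔ ∫ s in (0 : ℝ)..t, Real.exp (β s) < a := by
  have hmid := tendsto_midpointSum hβ ht.le
  have hiff : ∀ n : ℕ, 0 < n → ((gridState (t / n) (1 / -a, 0) (gridIncrement β t n) n).1 < 0
      ↔ midpointSum (t / n) (gridValue β t n) n < a) := fun n hn =>
    gridState_fst_neg_iff (by positivity) a ((gridValue_zero β t n).trans hβ0)
  rcases ha.lt_or_gt with hlt | hgt
  · filter_upwards [hmid.eventually_lt_const hlt, eventually_gt_atTop 0] with n hn hn0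
    simp only [hiff n hn0, hn, hlt]
  · filter_upwards [hmid.eventually_const_lt hgt, eventually_gt_atTop 0] with n hn hn0
    simp only [hiff n hn0, hn.not_gt, hgt.not_gt]

end PathLimit

section GaussianCubes

lemma integrable_abs_pow_gaussianReal (m : ℝ) (v : NNReal) (p : ℕ) :
    Integrable (fun x => |x| ^ p) (gaussianReal m v) := by
  rcases Nat.eq_zero_or_pos p with rfl | hp
  · simp
  · exact (memLp_id_gaussianReal (μ := m) (v := v) p).integrable_norm_pow hp.ne'

lemma gaussianReal_neg_half_eq_map {h : ℝ} (hh : 0 ≤ h) :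
    gaussianReal (-h / 2) h.toNNReal = (gaussianReal 0 1).map fun x => √h * x - h / 2 := by
  have hcomp : (fun x : ℝ => √h * x - h / 2) = (fun x => x - h / 2) ∘ fun x => √h * x := rfl
  rw [hcomp, ← Measure.map_map (by fun_prop) (by fun_prop), gaussianReal_map_const_mul,
    gaussianReal_map_sub_const, mul_zero, zero_sub, mul_one, neg_div]
  congr 1
  ext
  simp [Real.sq_sqrt hh, hh]

lemma integral_abs_pow_three_gaussianReal_le {h : ℝ} (hh : 0 ≤ h) :
    ∫ x, |x| ^ 3 ∂gaussianReal (-h / 2) h.toNNReal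
      ≤ 4 * (h * √h * (∫ x, |x| ^ 3 ∂gaussianReal 0 1) + (h / 2) ^ 3) := by
  have hcube : √h ^ 3 = h * √h := by rw [pow_succ, Real.sq_sqrt hh]
  have hpoint : ∀ x : ℝ, |√h * x - h / 2| ^ 3 ≤ 4 * (h * √h * |x| ^ 3 + (h / 2) ^ 3) := fun x =>
    calc |√h * x - h / 2| ^ 3 ≤ (√h * |x| + h / 2) ^ 3 := by
          gcongr
          exact (abs_sub _ _).trans_eq (by
            rw [abs_mul, abs_of_nonneg (Real.sqrt_nonneg h),
              abs_of_nonneg (div_nonneg hh zero_le_two)])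
      _ ≤ 2 ^ (3 - 1) * ((√h * |x|) ^ 3 + (h / 2) ^ 3) :=
          add_pow_le (by positivity) (by positivity) 3
      _ = 4 * (h * √h * |x| ^ 3 + (h / 2) ^ 3) := by rw [mul_pow, hcube]; norm_num
  have hint : Integrable (fun x : ℝ => h * √h * |x| ^ 3) (gaussianReal 0 1) :=
    (integrable_abs_pow_gaussianReal 0 1 3).const_mul _
  rw [gaussianReal_neg_half_eq_map hh, integral_map (by fun_prop) (by fun_prop)]
  refine (integral_mono_of_nonneg (ae_of_all _ fun x => by positivity)
    ((hint.add (integrable_const _)).const_mul 4) (ae_of_all _ hpoint)).trans_eq ?_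
  rw [integral_const_mul, integral_add' hint (integrable_const _), integral_const_mul,
    integral_const, probReal_univ, one_smul]

lemma tendsto_nat_mul_integral_abs_pow_three {t : ℝ} (ht : 0 ≤ t) :
    Tendsto (fun n : ℕ => n * ∫ x, |x| ^ 3 ∂gaussianReal (-(t / n) / 2) (t / n).toNNReal) atTop
      (𝓝 0) := by
  set C := ∫ x : ℝ, |x| ^ 3 ∂gaussianReal 0 1
  have hmesh : Tendsto (fun n : ℕ => t / n) atTop (𝓝 0) := tendsto_const_div_atTop_nhds_zero_nat t
  have hbound : Tendsto (fun n : ℕ => 4 * t * (√(t / n) * C + (t / n) ^ 2 / 8)) atTop (𝓝 0) := by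
    simpa using ((hmesh.sqrt.mul_const C).add ((hmesh.pow 2).div_const 8)).const_mul (4 * t)
  refine squeeze_zero' (Eventually.of_forall fun n => by positivity) ?_ hbound
  filter_upwards [eventually_gt_atTop 0] with n hn
  calc n * ∫ x, |x| ^ 3 ∂gaussianReal (-(t / n) / 2) (t / n).toNNReal
      ≤ n * (4 * (t / n * √(t / n) * C + (t / n / 2) ^ 3)) := by
        gcongr
        exact integral_abs_pow_three_gaussianReal_le (by positivity)
    _ = 4 * (n * (t / n)) * (√(t / n) * C + (t / n) ^ 2 / 8) := by ring
    _ = 4 * t * (√(t / n) * C + (t / n) ^ 2 / 8) := by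
        rw [mul_div_cancel₀ t (by positivity)]

end GaussianCubes

section Subsequence

lemma exists_strictMono_ae_tendsto_zero {Ω : Type*} [MeasurableSpace Ω] {μ : Measure Ω}
    {f : ℕ → Ω → ℝ} (hf : ∀ n, Integrable (f n) μ) (hf0 : ∀ n ω, 0 ≤ f n ω)
    (hlim : Tendsto (fun n => ∫ ω, f n ω ∂μ) atTop (𝓝 0)) :
    ∃ ns : ℕ → ℕ, StrictMono ns ∧ ∀ᵐ ω ∂μ, Tendsto (fun i => f (ns i) ω) atTop (𝓝 0) := by
  have hnorm : ∀ n, eLpNorm (f n - 0) 1 μ = ENNReal.ofReal (∫ ω, f n ω ∂μ) := fun n => by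
    rw [sub_zero, eLpNorm_one_eq_lintegral_enorm, ← ofReal_integral_norm_eq_lintegral_enorm (hf n)]
    simp only [Real.norm_of_nonneg (hf0 n _)]
  refine (tendstoInMeasure_of_tendsto_eLpNorm one_ne_zero (g := 0)
    (fun n => (hf n).aestronglyMeasurable) aestronglyMeasurable_zero ?_).exists_seq_tendsto_ae
  simpa only [hnorm, ENNReal.ofReal_zero] using ENNReal.tendsto_ofReal hlim

end Subsequence

section Brownian

/-- The path `s ↦ B_s - s / 2`, the logarithm of the exponential martingale `M B`. -/
def driftedPath {Ω : Type*} (B : ℝ → Ω → ℝ) (ω : Ω) (s : ℝ) : ℝ := B s ω - s / 2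

variable {P B} {t : ℝ} {n : ℕ}

lemma gridIncrement_driftedPath {Ω : Type*} (B : ℝ → Ω → ℝ) (t : ℝ) (n k : ℕ) (ω : Ω) :
    gridIncrement (driftedPath B ω) t n k
      = (B ((k + 1 : ℕ) * (t / n)) ω - B (k * (t / n)) ω) - t / n / 2 := by
  unfold gridIncrement gridValue driftedPath
  push_cast
  ring

lemma continuous_driftedPath (hB : IsBrownianMotion P B) (ω : Ω) :
    Continuous (driftedPath B ω) :=
  (hB.continuous_paths ω).sub (continuous_id.div_const 2)

lemma driftedPath_zero (hB : IsBrownianMotion P B) (ω : Ω) : driftedPath B ω 0 = 0 := by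
  simp [driftedPath, hB.start]

lemma measurable_gridIncrement (hB : IsBrownianMotion P B) (t : ℝ) (n k : ℕ) :
    Measurable fun ω => gridIncrement (driftedPath B ω) t n k := by
  simp only [gridIncrement_driftedPath]
  exact ((hB.measurable _).sub (hB.measurable _)).sub_const _

lemma map_gridIncrement (hB : IsBrownianMotion P B) (ht : 0 ≤ t) (n k : ℕ) :
    P.map (fun ω => gridIncrement (driftedPath B ω) t n k)
      = gaussianReal (-(t / n) / 2) (t / n).toNNReal := by
  have hlaw := hB.gaussian_increments (k * (t / n)) ((k + 1 : ℕ) * (t / n)) (by positivity)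
    (by gcongr; exact k.le_succ)
  rw [show ((k + 1 : ℕ) : ℝ) * (t / n) - k * (t / n) = t / n by push_cast; ring] at hlaw
  have hcomp : (fun ω => gridIncrement (driftedPath B ω) t n k)
      = (fun x => x - t / n / 2) ∘ fun ω => B ((k + 1 : ℕ) * (t / n)) ω - B (k * (t / n)) ω :=
    funext fun ω => gridIncrement_driftedPath B t n k ω
  have hmeas : Measurable fun ω => B ((k + 1 : ℕ) * (t / n)) ω - B (k * (t / n)) ω :=
    (hB.measurable _).sub (hB.measurable _)
  rw [hcomp, ← Measure.map_map (by fun_prop) hmeas, hlaw, gaussianReal_map_sub_const, zero_sub,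
    neg_div]

lemma iIndepFun_gridIncrement (hB : IsBrownianMotion P B) (ht : 0 ≤ t) (n : ℕ) :
    iIndepFun (fun k ω => gridIncrement (driftedPath B ω) t n k) P := by
  have hindep := hB.indep_increments (fun k => k * (t / n))
    (fun i j hij => mul_le_mul_of_nonneg_right (Nat.cast_le.2 hij) (by positivity)) (by simp)
  simp only [gridIncrement_driftedPath]
  exact hindep.comp (fun _ x => x - t / n / 2) fun _ => by fun_prop

lemma integrable_abs_gridIncrement_pow (hB : IsBrownianMotion P B) (ht : 0 ≤ t) (n k p : ℕ) :
    Integrable (fun ω => |gridIncrement (driftedPath B ω) t n k| ^ p) P := by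
  have hpow := integrable_abs_pow_gaussianReal (-(t / n) / 2) (t / n).toNNReal p
  rw [← map_gridIncrement hB ht n k] at hpow
  exact hpow.comp_measurable (measurable_gridIncrement hB t n k)

lemma integral_cubicVariation (hB : IsBrownianMotion P B) (ht : 0 ≤ t) (n : ℕ) :
    ∫ ω, cubicVariation (driftedPath B ω) t n ∂P
      = n * ∫ x, |x| ^ 3 ∂gaussianReal (-(t / n) / 2) (t / n).toNNReal := by
  have hterm : ∀ k, ∫ ω, |gridIncrement (driftedPath B ω) t n k| ^ 3 ∂P
      = ∫ x, |x| ^ 3 ∂gaussianReal (-(t / n) / 2) (t / n).toNNReal := fun k => by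
    rw [← map_gridIncrement hB ht n k,
      integral_map (measurable_gridIncrement hB t n k).aemeasurable (by fun_prop)]
  unfold cubicVariation
  rw [integral_finsetSum _ fun k _ => integrable_abs_gridIncrement_pow hB ht n k 3]
  simp only [hterm, Finset.sum_const, Finset.card_range, nsmul_eq_mul]

lemma exists_strictMono_ae_tendsto_cubicVariation (hB : IsBrownianMotion P B) (ht : 0 ≤ t) :
    ∃ ns : ℕ → ℕ, StrictMono ns ∧
      ∀ᵐ ω ∂P, Tendsto (fun i => cubicVariation (driftedPath B ω) t (ns i)) atTop (𝓝 0) := by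
  refine exists_strictMono_ae_tendsto_zero (f := fun n ω => cubicVariation (driftedPath B ω) t n)
    (fun n => integrable_finsetSum _ fun k _ => integrable_abs_gridIncrement_pow hB ht n k 3)
    (fun n ω => Finset.sum_nonneg fun k _ => by positivity) ?_
  simpa only [integral_cubicVariation hB ht] using tendsto_nat_mul_integral_abs_pow_three ht

end Brownian

section TimeIntegral

variable {P B} {s t : ℝ}

lemma measurable_M (hB : IsBrownianMotion P B) (t : ℝ) : Measurable (M B t) :=
  ((hB.measurable t).sub_const _).exp

lemma measurable_uncurry_M (hB : IsBrownianMotion P B) : Measurable (Function.uncurry (M B)) :=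
  measurable_uncurry_of_continuous_of_measurable
    (fun ω => Real.continuous_exp.comp (continuous_driftedPath hB ω)) (measurable_M hB)

lemma integral_M (hB : IsBrownianMotion P B) (hs : 0 ≤ s) : ∫ ω, M B s ω ∂P = 1 := by
  have hlaw : P.map (B s) = gaussianReal 0 s.toNNReal := by
    simpa only [hB.start, sub_zero] using hB.gaussian_increments 0 s le_rfl hs
  calc ∫ ω, M B s ω ∂P = ∫ ω, Real.exp (1 * B s ω) * Real.exp (-(s / 2)) ∂P := by
        simp only [M, one_mul, ← Real.exp_add, sub_eq_add_neg]
    _ = mgf (B s) P 1 * Real.exp (-(s / 2)) := integral_mul_const _ _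
    _ = 1 := by
        rw [mgf_gaussianReal hlaw, ← Real.exp_add, Real.coe_toNNReal s hs, Real.exp_eq_one_iff]
        ring

lemma integrable_M (hB : IsBrownianMotion P B) (hs : 0 ≤ s) : Integrable (M B s) P :=
  .of_integral_ne_zero (by rw [integral_M hB hs]; exact one_ne_zero)

lemma A_eq_integral_M {Ω : Type*} (B : ℝ → Ω → ℝ) (ht : 0 ≤ t) (ω : Ω) :
    A B t ω = ∫ s in Ioc 0 t, M B s ω :=
  intervalIntegral.integral_of_le ht

lemma A_nonneg {Ω : Type*} (B : ℝ → Ω → ℝ) (ht : 0 ≤ t) (ω : Ω) : 0 ≤ A B t ω :=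
  intervalIntegral.integral_nonneg ht fun _ _ => (Real.exp_pos _).le

lemma measurable_A (hB : IsBrownianMotion P B) (ht : 0 ≤ t) : Measurable (A B t) := by
  rw [funext (A_eq_integral_M B ht)]
  exact (measurable_uncurry_M hB).stronglyMeasurable.integral_prod_left'.measurable

lemma integrable_A (hB : IsBrownianMotion P B) (ht : 0 ≤ t) : Integrable (A B t) P := by
  have := hB.isProbabilityMeasure
  have hprod : Integrable (Function.uncurry (M B)) ((volume.restrict (Ioc 0 t)).prod P) := by
    refine (integrable_prod_iff (measurable_uncurry_M hB).aestronglyMeasurable).2 ⟨?_, ?_⟩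
    · filter_upwards [ae_restrict_mem measurableSet_Ioc] with s hs using integrable_M hB hs.1.le
    · refine (integrable_const (1 : ℝ)).congr ?_
      filter_upwards [ae_restrict_mem measurableSet_Ioc] with s hs
      rw [← integral_M hB hs.1.le]
      exact integral_congr_ae (ae_of_all _ fun ω => (Real.norm_of_nonneg (Real.exp_pos _).le).symm)
  rw [funext (A_eq_integral_M B ht)]
  exact hprod.integral_prod_right

end TimeIntegral

section Duality

/-- The logarithm `2 (M_t / (c + A_t) - 1 / c)` of the density relating the two chains as the mesh
tends to zero: `c > 0` in the chain started at `1 / c > 0`, and `c < 0` in its dual. -/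
def logDensity {Ω : Type*} (B : ℝ → Ω → ℝ) (c t : ℝ) (ω : Ω) : ℝ :=
  2 * (M B t ω / (c + A B t ω) - 1 / c)

variable {P B} {a c t : ℝ}

lemma measurable_logDensity (hB : IsBrownianMotion P B) (ht : 0 ≤ t) (c : ℝ) :
    Measurable (logDensity B c t) :=
  (((measurable_M hB t).div ((measurable_A hB ht).const_add c)).sub_const _).const_mul 2

lemma measurable_gridState (hB : IsBrownianMotion P B) (h t : ℝ) (s₀ : ℝ × ℝ) (n k : ℕ) :
    Measurable fun ω => gridState h s₀ (gridIncrement (driftedPath B ω) t n) k :=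
  measurable_recursion (S := fun k ω => gridState h s₀ (gridIncrement (driftedPath B ω) t n) k)
    (measurable_gridStep h) (fun _ => rfl) (fun _ _ => rfl) k
    fun j _ => measurable_gridIncrement hB t n j

lemma lintegral_gridState_dual_brownian (hB : IsBrownianMotion P B) (ht : 0 < t) (ha : 0 < a)
    {n : ℕ} (hn : 0 < n) (K : ENNReal) :
    ∫⁻ ω, min (ENNReal.ofReal (Real.exp
        (gridState (t / n) (1 / a, 0) (gridIncrement (driftedPath B ω) t n) n).2)) K ∂P
      = ∫⁻ ω, {s : ℝ × ℝ | s.1 < 0}.indicator (fun s => min 1 (K * ENNReal.ofReal (Real.exp s.2)))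
        (gridState (t / n) (1 / -a, 0) (gridIncrement (driftedPath B ω) t n) n) ∂P := by
  have hmin : ∀ x : ℝ, ENNReal.ofReal (Real.exp x) * min 1 (K * ENNReal.ofReal (Real.exp (-x)))
      = min (ENNReal.ofReal (Real.exp x)) K := fun x => by
    rw [mul_min, mul_one, mul_left_comm, ← ENNReal.ofReal_mul (Real.exp_pos _).le, ← Real.exp_add,
      add_neg_cancel, Real.exp_zero, ENNReal.ofReal_one, mul_one]
  rw [one_div_neg_eq_neg_one_div, ← lintegral_gridState_dual (by positivity) (one_div_pos.2 ha)
    (measurable_gridIncrement hB t n) (iIndepFun_gridIncrement hB ht.le n)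
    (map_gridIncrement hB ht.le n) n (by fun_prop)]
  simp only [Prod.snd_neg, hmin]

variable {l : Filter ℕ} [l.IsCountablyGenerated] {F : ℝ → ENNReal} {C : ENNReal}

lemma tendsto_lintegral_gridState (hB : IsBrownianMotion P B) (ht : 0 < t) (hl : l ≤ atTop)
    (hV : ∀ᵐ ω ∂P, Tendsto (cubicVariation (driftedPath B ω) t) l (𝓝 0)) (hc : 0 < c)
    (hF : Continuous F) (hC : C ≠ ⊤) (hFC : ∀ x, F x ≤ C) :
    Tendsto (fun n : ℕ => ∫⁻ ω,
        F (gridState (t / n) (1 / c, 0) (gridIncrement (driftedPath B ω) t n) n).2 ∂P) l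
      (𝓝 (∫⁻ ω, F (logDensity B c t ω) ∂P)) := by
  have := hB.isProbabilityMeasure
  refine tendsto_lintegral_filter_of_dominated_convergence (fun _ => C)
    (Eventually.of_forall fun n => hF.measurable.comp (measurable_gridState hB _ t _ n n).snd)
    (Eventually.of_forall fun n => ae_of_all _ fun ω => hFC _) (by simpa) ?_
  filter_upwards [hV] with ω hω
  exact (hF.tendsto _).comp (tendsto_gridState_snd (continuous_driftedPath hB ω)
    (driftedPath_zero hB ω) ht hl hω (.inl hc))

lemma tendsto_lintegral_indicator_gridState (hB : IsBrownianMotion P B) (ht : 0 < t)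
    (hl : l ≤ atTop) (hV : ∀ᵐ ω ∂P, Tendsto (cubicVariation (driftedPath B ω) t) l (𝓝 0))
    (hatom : P {ω | A B t ω = a} = 0) (hF : Continuous F) (hC : C ≠ ⊤) (hFC : ∀ x, F x ≤ C) :
    Tendsto (fun n : ℕ => ∫⁻ ω, {s : ℝ × ℝ | s.1 < 0}.indicator (fun s => F s.2)
        (gridState (t / n) (1 / -a, 0) (gridIncrement (driftedPath B ω) t n) n) ∂P) l
      (𝓝 (∫⁻ ω in {ω | A B t ω < a}, F (logDensity B (-a) t ω) ∂P)) := by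
  have := hB.isProbabilityMeasure
  have hne : ∀ᵐ ω ∂P, A B t ω ≠ a := measure_eq_zero_iff_ae_notMem.1 hatom
  rw [← lintegral_indicator (measurableSet_lt (measurable_A hB ht.le) measurable_const)]
  refine tendsto_lintegral_filter_of_dominated_convergence (fun _ => C)
    (Eventually.of_forall fun n => ((hF.measurable.comp measurable_snd).indicator
      (measurableSet_lt measurable_fst measurable_const)).comp (measurable_gridState hB _ t _ n n))
    (Eventually.of_forall fun n => ae_of_all _ fun ω =>
      indicator_apply_le' (fun _ => hFC _) fun _ => zero_le) (by simpa) ?_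
  filter_upwards [hV, hne] with ω hω hneω
  have hsign := (eventually_gridState_fst_neg_iff (continuous_driftedPath hB ω)
    (driftedPath_zero hB ω) ht hneω).filter_mono hl
  by_cases hlt : A B t ω < a
  · have hlim := (hF.tendsto _).comp (tendsto_gridState_snd (c := -a) (continuous_driftedPath hB ω)
      (driftedPath_zero hB ω) ht hl hω (.inr (neg_add_neg_iff.2 hlt)))
    rw [indicator_of_mem (s := {ω | A B t ω < a}) hlt]
    exact hlim.congr' (hsign.mono fun n hn =>
      (indicator_of_mem (s := {s : ℝ × ℝ | s.1 < 0}) (hn.2 hlt) _).symm)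
  · rw [indicator_of_notMem (s := {ω | A B t ω < a}) hlt]
    exact tendsto_const_nhds.congr' (hsign.mono fun n hn =>
      (indicator_of_notMem (s := {s : ℝ × ℝ | s.1 < 0}) (fun h => hlt (hn.1 h)) _).symm)

lemma lintegral_min_exp_logDensity (hB : IsBrownianMotion P B) (ht : 0 < t) (ha : 0 < a)
    (hatom : P {ω | A B t ω = a} = 0) {K : ENNReal} (hK : K ≠ ⊤) :
    ∫⁻ ω, min (ENNReal.ofReal (Real.exp (logDensity B a t ω))) K ∂P
      = ∫⁻ ω in {ω | A B t ω < a},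
        min 1 (K * ENNReal.ofReal (Real.exp (logDensity B (-a) t ω))) ∂P := by
  obtain ⟨ns, hns, hV⟩ := exists_strictMono_ae_tendsto_cubicVariation hB ht.le
  have hl : map ns atTop ≤ atTop := hns.tendsto_atTop
  have hexp : Continuous fun x => ENNReal.ofReal (Real.exp x) :=
    ENNReal.continuous_ofReal.comp Real.continuous_exp
  refine tendsto_nhds_unique
    (tendsto_lintegral_gridState hB ht hl hV ha (hexp.min continuous_const) hK
      fun _ => min_le_right _ _)
    ((tendsto_lintegral_indicator_gridState hB ht hl hV hatom
      (continuous_const.min ((ENNReal.continuous_const_mul hK).comp hexp)) ENNReal.one_ne_top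
      fun _ => min_le_left _ _).congr' ?_)
  filter_upwards [hl (Ioi_mem_atTop 0)] with n hn
  exact (lintegral_gridState_dual_brownian hB ht ha hn K).symm

lemma lintegral_exp_logDensity (hB : IsBrownianMotion P B) (ht : 0 < t) (ha : 0 < a)
    (hatom : P {ω | A B t ω = a} = 0) :
    ∫⁻ ω, ENNReal.ofReal (Real.exp (logDensity B a t ω)) ∂P = P {ω | A B t ω < a} := by
  have hmeas := measurable_logDensity hB ht.le
  have hleft : ∀ y : ENNReal, ⨆ K : ℕ, min y (K : ENNReal) = y := fun y => by
    rw [← inf_iSup_eq, ENNReal.iSup_natCast, inf_top_eq]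
  have hright : ∀ x : ℝ, ⨆ K : ℕ, min 1 ((K : ENNReal) * ENNReal.ofReal (Real.exp x)) = 1 :=
    fun x => by
      rw [← inf_iSup_eq, ← ENNReal.iSup_mul, ENNReal.iSup_natCast,
        ENNReal.top_mul (ENNReal.ofReal_pos.2 (Real.exp_pos x)).ne', inf_top_eq]
  calc ∫⁻ ω, ENNReal.ofReal (Real.exp (logDensity B a t ω)) ∂P
      = ⨆ K : ℕ, ∫⁻ ω, min (ENNReal.ofReal (Real.exp (logDensity B a t ω))) K ∂P := by
        rw [← lintegral_iSup (fun K => by fun_prop) fun K K' hK ω => by gcongr]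
        simp only [hleft]
    _ = ⨆ K : ℕ, ∫⁻ ω in {ω | A B t ω < a},
          min 1 (K * ENNReal.ofReal (Real.exp (logDensity B (-a) t ω))) ∂P := by
        simp only [lintegral_min_exp_logDensity hB ht ha hatom (ENNReal.natCast_ne_top _)]
    _ = P {ω | A B t ω < a} := by
        rw [← lintegral_iSup (fun K => by fun_prop) fun K K' hK ω => by gcongr]
        simp only [hright, setLIntegral_one]

end Duality

section Atoms

variable {Ω : Type*} [MeasurableSpace Ω] {μ : Measure Ω} {X : Ω → ℝ} {a : ℝ}

lemma frequently_measure_eq_eq_zero [SFinite μ] (hX : Measurable X) {U : Set ℝ} (hU : IsOpen U)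
    (ha : a ∈ closure U) : ∃ᶠ u in 𝓝[U] a, μ {ω | X ω = u} = 0 := by
  have hdense : Dense {u | μ {ω | X ω = u} = 0} :=
    ((Measure.countable_meas_level_set_pos (μ := μ) hX).dense_compl ℝ).mono
      fun u hu => nonpos_iff_eq_zero.1 (not_lt.1 hu)
  have hmem : a ∈ closure (U ∩ {u | μ {ω | X ω = u} = 0}) :=
    closure_minimal (hdense.open_subset_closure_inter hU) isClosed_closure ha
  exact frequently_nhdsWithin_iff.2 ((mem_closure_iff_frequently.1 hmem).mono fun u hu => hu.symm)

lemma measure_eq_eq_zero_of_continuousAt [IsFiniteMeasure μ] (hX : Measurable X) {G : ℝ → ℝ}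
    (hG : ContinuousAt G a)
    (hGX : ∀ᶠ u in 𝓝 a, μ {ω | X ω = u} = 0 → G u = μ.real {ω | X ω < u}) :
    μ {ω | X ω = a} = 0 := by
  have hle : μ.real {ω | X ω ≤ a} ≤ G a := by
    refine ge_of_tendsto_of_frequently (hG.mono_left (nhdsWithin_le_nhds (s := Ioi a))) ?_
    refine ((frequently_measure_eq_eq_zero (μ := μ) hX isOpen_Ioi (by simp)).and_eventually
      ((hGX.filter_mono nhdsWithin_le_nhds).and self_mem_nhdsWithin)).mono fun u hu => ?_
    rw [hu.2.1 hu.1]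
    exact measureReal_mono fun ω hω => lt_of_le_of_lt hω hu.2.2
  have hge : G a ≤ μ.real {ω | X ω < a} := by
    refine le_of_tendsto_of_frequently (hG.mono_left (nhdsWithin_le_nhds (s := Iio a))) ?_
    refine ((frequently_measure_eq_eq_zero (μ := μ) hX isOpen_Iio (by simp)).and_eventually
      ((hGX.filter_mono nhdsWithin_le_nhds).and self_mem_nhdsWithin)).mono fun u hu => ?_
    rw [hu.2.1 hu.1]
    exact measureReal_mono fun ω hω => lt_trans hω hu.2.2
  have hsplit : μ.real {ω | X ω ≤ a} = μ.real {ω | X ω < a} + μ.real {ω | X ω = a} := by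
    have hdisj : Disjoint {ω | X ω < a} {ω | X ω = a} :=
      disjoint_left.2 fun ω hlt heq => ne_of_lt hlt heq
    rw [← measureReal_union hdisj (measurableSet_eq_fun hX measurable_const)]
    exact congrArg μ.real (Set.ext fun ω => le_iff_lt_or_eq (a := X ω) (b := a))
  exact (measureReal_eq_zero_iff).1 (le_antisymm (by linarith) measureReal_nonneg)

end Atoms

section DistributionFunction

variable {P B} {a c t : ℝ}

lemma integral_exp_logDensity_of_measure_eq_zero (hB : IsBrownianMotion P B) (ht : 0 < t)
    (ha : 0 < a) (hatom : P {ω | A B t ω = a} = 0) :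
    ∫ ω, Real.exp (logDensity B a t ω) ∂P = P.real {ω | A B t ω < a} := by
  rw [integral_eq_lintegral_of_nonneg_ae (ae_of_all _ fun ω => (Real.exp_pos _).le)
    (measurable_logDensity hB ht.le a).exp.aestronglyMeasurable,
    lintegral_exp_logDensity hB ht ha hatom, measureReal_def]

lemma integrable_exp_logDensity_of_measure_eq_zero (hB : IsBrownianMotion P B) (ht : 0 < t)
    (ha : 0 < a) (hatom : P {ω | A B t ω = a} = 0) :
    Integrable (fun ω => Real.exp (logDensity B a t ω)) P := by
  have := hB.isProbabilityMeasure
  refine ⟨(measurable_logDensity hB ht.le a).exp.aestronglyMeasurable, ?_⟩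
  rw [hasFiniteIntegral_iff_ofReal (ae_of_all _ fun ω => (Real.exp_pos _).le),
    lintegral_exp_logDensity hB ht ha hatom]
  exact measure_lt_top P _

lemma logDensity_le_add {Ω : Type*} (B : ℝ → Ω → ℝ) (ht : 0 ≤ t) (hc : 0 < c) (hca : c ≤ a)
    (ω : Ω) : logDensity B a t ω ≤ logDensity B c t ω + 2 / c := by
  have hA := A_nonneg B ht ω
  have hM : 0 < M B t ω := Real.exp_pos _
  have hac : 0 ≤ 1 / a := one_div_nonneg.2 (hc.le.trans hca)
  have hmono : M B t ω / (a + A B t ω) ≤ M B t ω / (c + A B t ω) := by gcongr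
  calc logDensity B a t ω ≤ 2 * (M B t ω / (c + A B t ω)) := by unfold logDensity; linarith
    _ = logDensity B c t ω + 2 / c := by unfold logDensity; ring

lemma continuousAt_logDensity {Ω : Type*} (B : ℝ → Ω → ℝ) (ht : 0 ≤ t) (ha : 0 < a) (ω : Ω) :
    ContinuousAt (fun u => logDensity B u t ω) a := by
  have hA := A_nonneg B ht ω
  have hne : a + A B t ω ≠ 0 := by positivity
  unfold logDensity
  fun_prop (disch := first | exact hne | exact ha.ne')

lemma continuousAt_integral_exp_logDensity (hB : IsBrownianMotion P B) (ht : 0 < t) (ha : 0 < a) :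
    ContinuousAt (fun u => ∫ ω, Real.exp (logDensity B u t ω) ∂P) a := by
  have := hB.isProbabilityMeasure
  obtain ⟨c, hatom, hc0, hca⟩ := ((frequently_measure_eq_eq_zero (μ := P)
    (measurable_A hB ht.le) (isOpen_Ioo (a := 0) (b := a)) (a := a)
      (by simp [closure_Ioo ha.ne, ha.le])).and_eventually self_mem_nhdsWithin).exists
  refine continuousAt_of_dominated
    (bound := fun ω => Real.exp (logDensity B c t ω) * Real.exp (2 / c))
    (Eventually.of_forall fun u => (measurable_logDensity hB ht.le u).exp.aestronglyMeasurable) ?_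
    ((integrable_exp_logDensity_of_measure_eq_zero hB ht hc0 hatom).mul_const _)
    (ae_of_all _ fun ω => (continuousAt_logDensity B ht.le ha ω).rexp)
  filter_upwards [Ioi_mem_nhds hca] with u hu
  refine ae_of_all _ fun ω => ?_
  rw [Real.norm_of_nonneg (Real.exp_pos _).le, ← Real.exp_add, Real.exp_le_exp]
  exact logDensity_le_add B ht.le hc0 (le_of_lt hu) ω

lemma measure_A_eq_eq_zero (hB : IsBrownianMotion P B) (ht : 0 < t) (ha : 0 < a) :
    P {ω | A B t ω = a} = 0 := by
  have := hB.isProbabilityMeasure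
  refine measure_eq_eq_zero_of_continuousAt (measurable_A hB ht.le)
    (continuousAt_integral_exp_logDensity hB ht ha) ?_
  filter_upwards [Ioi_mem_nhds ha] with u hu using
    integral_exp_logDensity_of_measure_eq_zero hB ht hu

lemma integral_exp_logDensity (hB : IsBrownianMotion P B) (ht : 0 < t) (ha : 0 < a) :
    ∫ ω, Real.exp (logDensity B a t ω) ∂P = P.real {ω | A B t ω ≤ a} := by
  have hatom := measure_A_eq_eq_zero hB ht ha
  have hne : ∀ᵐ ω ∂P, A B t ω ≠ a := measure_eq_zero_iff_ae_notMem.1 hatom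
  rw [integral_exp_logDensity_of_measure_eq_zero hB ht ha hatom]
  exact measureReal_congr (hne.mono fun ω hω => propext hω.le_iff_lt.symm)

lemma exp_logDensity {Ω : Type*} (B : ℝ → Ω → ℝ) (a t : ℝ) (ω : Ω) :
    Real.exp (logDensity B a t ω)
      = Real.exp (-2 / a) * Real.exp (2 * Real.exp (B t ω - t / 2) / (a + A B t ω)) := by
  rw [← Real.exp_add, logDensity, M]
  ring_nf

end DistributionFunction

section PositivePart

lemma hasDerivAt_max_sub_zero {a x : ℝ} (hax : x ≠ a) :
    HasDerivAt (fun u => max (x - u) 0) ((Iio x).indicator (fun _ => -1) a) a := by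
  rcases hax.lt_or_gt with hlt | hgt
  · rw [indicator_of_notMem (show a ∉ Iio x from hlt.not_gt)]
    refine (hasDerivAt_const a 0).congr_of_eventuallyEq ?_
    filter_upwards [Ioi_mem_nhds hlt] with u hu using max_eq_right (sub_nonpos.2 (le_of_lt hu))
  · rw [indicator_of_mem (show a ∈ Iio x from hgt)]
    refine ((hasDerivAt_id a).const_sub x).congr_of_eventuallyEq ?_
    filter_upwards [Iio_mem_nhds hgt] with u hu using max_eq_left (sub_nonneg.2 (le_of_lt hu))

variable {Ω : Type*} [MeasurableSpace Ω] {μ : Measure Ω} [IsFiniteMeasure μ] {X : Ω → ℝ} {a : ℝ}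

lemma hasDerivAt_integral_max_sub_zero (hX : Integrable X μ) (hatom : μ {ω | X ω = a} = 0) :
    HasDerivAt (fun u => ∫ ω, max (X ω - u) 0 ∂μ) (-μ.real {ω | a < X ω}) a := by
  have hne : ∀ᵐ ω ∂μ, X ω ≠ a := measure_eq_zero_iff_ae_notMem.1 hatom
  have hset : NullMeasurableSet {ω | a < X ω} μ :=
    nullMeasurableSet_lt aemeasurable_const hX.aemeasurable
  have hderiv := (hasDerivAt_integral_of_dominated_loc_of_lip (F := fun u ω => max (X ω - u) 0)
    (F' := {ω | a < X ω}.indicator fun _ => -1) (bound := fun _ => 1) univ_mem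
    (Eventually.of_forall fun u => (hX.sub (integrable_const u)).pos_part.aestronglyMeasurable)
    (hX.sub (integrable_const a)).pos_part
    (aestronglyMeasurable_const.indicator₀ hset)
    (ae_of_all _ fun ω => by
      simpa using (IsometryEquiv.subLeft (X ω)).isometry.lipschitz.max_const 0)
    (integrable_const 1) (hne.mono fun ω hω => hasDerivAt_max_sub_zero hω)).2
  rwa [integral_indicator₀ hset, setIntegral_const, smul_eq_mul, mul_neg_one] at hderiv

end PositivePart

theorem deriv_expected_max_formula (hB : IsBrownianMotion P B) (t a : ℝ)
    (ht : 0 < t) (ha : 0 < a) :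
    HasDerivAt (fun u => ∫ ω, max (A B t ω - u) 0 ∂P)
      (-1 + Real.exp (-2 / a) *
        ∫ ω, Real.exp (2 * Real.exp (B t ω - t / 2) / (a + A B t ω)) ∂P) a := by
  have := hB.isProbabilityMeasure
  have hmeas : MeasurableSet {ω | A B t ω ≤ a} :=
    measurableSet_le (measurable_A hB ht.le) measurable_const
  have htail : P.real {ω | a < A B t ω} = 1 - P.real {ω | A B t ω ≤ a} := by
    rw [← probReal_compl_eq_one_sub hmeas]
    simp only [← not_le]
    rfl
  have hcdf : P.real {ω | A B t ω ≤ a} = Real.exp (-2 / a) *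
      ∫ ω, Real.exp (2 * Real.exp (B t ω - t / 2) / (a + A B t ω)) ∂P := by
    rw [← integral_exp_logDensity hB ht ha, ← integral_const_mul]
    simp only [exp_logDensity]
  rw [← hcdf, show -1 + P.real {ω | A B t ω ≤ a} = -P.real {ω | a < A B t ω} by rw [htail]; ring]
  exact hasDerivAt_integral_max_sub_zero (integrable_A hB ht.le) (measure_A_eq_eq_zero hB ht ha)
end
end
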